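/- arXiv:2201.04315 — 2 statements merged into one kernel-verified Lean document; each statement's English description precedes it below -/
import Mathlib

section
/- Let 𝒫 = ∏_{j=1}^d 𝒫_j be a product class of distributions on 𝒳 = ∏_{j=1}^d 𝒳_j, i.e. every P ∈ 𝒫 has the form P = ∏_{j=1}^d P_j with P_j ∈ 𝒫_j for each j, and all such products belong to 𝒫. Then for every even integer n ≥ 2 and every integer m ≥ 0, the minimax sample-amplification error satisfies ε*(𝒫,n,m) ≤ sqrt( (m²/n) · Σ_{j=1}^d r_{χ²}(𝒫_j, n/2) ). -/
open MeasureTheory ProbabilityTheory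
open scoped ENNReal NNReal Classical

/-- Total variation distance between two measures: `sup_A |P(A) - Q(A)|`. -/
noncomputable def tvDist {X : Type*} [MeasurableSpace X] (μ ν : Measure X) : ℝ :=
  ⨆ A : {s : Set X // MeasurableSet s}, |(μ A).toReal - (ν A).toReal|

/-- Minimax sample amplification error `ε*(𝒫, n, m)` for the family `(P θ)_θ`. -/
noncomputable def ampErr {X Θ : Type*} [MeasurableSpace X] (P : Θ → Measure X)
    (n m : ℕ) : ℝ :=
  ⨅ T : {T : Kernel (Fin n → X) (Fin (n + m) → X) // IsMarkovKernel T},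
    ⨆ θ : Θ, tvDist (Measure.pi fun _ : Fin (n + m) => P θ)
      ((Measure.pi fun _ : Fin n => P θ).bind T.1)

/-- The chi-squared divergence `χ²(P‖Q) = ∫ (dP/dQ - 1)² dQ` if `P ≪ Q`, `∞` otherwise. -/
noncomputable def chiSqDiv {X : Type*} [MeasurableSpace X] (P Q : Measure X) : ℝ≥0∞ :=
  if P ≪ Q then ∫⁻ x, ENNReal.ofReal (((P.rnDeriv Q x).toReal - 1) ^ 2) ∂Q else ⊤

/-- The `χ²`-estimation error `r_{χ²}(𝒫, n)`: the minimax risk of estimating the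
distribution under expected chi-squared divergence from `n` i.i.d. samples. -/
noncomputable def chiSqRisk {X Θ : Type*} [MeasurableSpace X] (P : Θ → Measure X)
    (n : ℕ) : ℝ≥0∞ :=
  ⨅ est : {κ : Kernel (Fin n → X) X // IsMarkovKernel κ},
    ⨆ θ : Θ, ∫⁻ x, chiSqDiv ((est.1) x) (P θ) ∂(Measure.pi fun _ : Fin n => P θ)

/-!
Learn the marginals from one part of the sample, then enlarge the remaining `k` points one at a
time: in each coordinate independently, insert a draw from the estimated marginal at a uniformly
random position. If the estimate has density `D` with respect to the true marginal, the enlarged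
sample of size `M + 1` has as density the sample mean of `D`, so that its `χ²`-divergence from an
i.i.d. sample is `1 / (M + 1)` times that of the estimate. For products `1 + χ²` is multiplicative,
and `2 TV² ≤ log (1 + χ²)`; hence the squared error of a step is at most `∑ χ² / (2 (k + 1))`. The
`m` steps are chained by the triangle inequality, and Jensen's inequality averages the squared
error over the learning part.
-/

section TotalVariation

variable {X Y : Type*} [MeasurableSpace X] [MeasurableSpace Y]

/-- The one-sided total variation distance, with values in `ℝ≥0∞`: the largest excess of
`∫⁻ f ∂μ` over `∫⁻ f ∂ν` among measurable tests `f` with values in `[0, 1]`. It dominates `tvDist`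
on probability measures. -/
noncomputable def etvDist (μ ν : Measure X) : ℝ≥0∞ :=
  ⨆ (f : X → ℝ≥0∞) (_ : Measurable f) (_ : ∀ x, f x ≤ 1), ∫⁻ x, f x ∂μ - ∫⁻ x, f x ∂ν

variable {μ ν : Measure X}

theorem etvDist_le_iff {B : ℝ≥0∞} :
    etvDist μ ν ≤ B ↔ ∀ f : X → ℝ≥0∞, Measurable f → (∀ x, f x ≤ 1) →
      ∫⁻ x, f x ∂μ ≤ ∫⁻ x, f x ∂ν + B := by
  simp only [etvDist, iSup_le_iff, tsub_le_iff_left]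

theorem lintegral_le_lintegral_add_etvDist {f : X → ℝ≥0∞} (hf : Measurable f)
    (hf1 : ∀ x, f x ≤ 1) : ∫⁻ x, f x ∂μ ≤ ∫⁻ x, f x ∂ν + etvDist μ ν :=
  etvDist_le_iff.1 le_rfl f hf hf1

theorem etvDist_self (μ : Measure X) : etvDist μ μ = 0 := by simp [etvDist]

theorem etvDist_triangle (μ ν ρ : Measure X) : etvDist μ ρ ≤ etvDist μ ν + etvDist ν ρ := by
  refine etvDist_le_iff.2 fun f hf hf1 => ?_
  calc ∫⁻ x, f x ∂μ ≤ ∫⁻ x, f x ∂ν + etvDist μ ν := lintegral_le_lintegral_add_etvDist hf hf1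
    _ ≤ ∫⁻ x, f x ∂ρ + etvDist ν ρ + etvDist μ ν := by
      gcongr; exact lintegral_le_lintegral_add_etvDist hf hf1
    _ = ∫⁻ x, f x ∂ρ + (etvDist μ ν + etvDist ν ρ) := by ring

theorem etvDist_comp_le (κ : Kernel X Y) [IsMarkovKernel κ] :
    etvDist (κ ∘ₘ μ) (κ ∘ₘ ν) ≤ etvDist μ ν := by
  refine etvDist_le_iff.2 fun f hf hf1 => ?_
  rw [Measure.lintegral_bind κ.measurable.aemeasurable hf.aemeasurable,
    Measure.lintegral_bind κ.measurable.aemeasurable hf.aemeasurable]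
  exact lintegral_le_lintegral_add_etvDist hf.lintegral_kernel fun x =>
    (lintegral_mono hf1).trans (by simp)

theorem etvDist_map_le {g : X → Y} (hg : Measurable g) :
    etvDist (μ.map g) (ν.map g) ≤ etvDist μ ν := by
  simpa only [Measure.deterministic_comp_eq_map hg]
    using etvDist_comp_le (μ := μ) (ν := ν) (Kernel.deterministic g hg)

theorem etvDist_compProd_le [SFinite μ] (κ η : Kernel X Y) [IsSFiniteKernel κ]
    [IsSFiniteKernel η] : etvDist (μ ⊗ₘ κ) (μ ⊗ₘ η) ≤ ∫⁻ x, etvDist (κ x) (η x) ∂μ := by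
  refine etvDist_le_iff.2 fun f hf hf1 => ?_
  rw [Measure.lintegral_compProd hf, Measure.lintegral_compProd hf,
    ← lintegral_add_left hf.lintegral_kernel_prod_right']
  exact lintegral_mono fun x => lintegral_le_lintegral_add_etvDist
    (hf.comp measurable_prodMk_left) fun y => hf1 (x, y)

theorem etvDist_le_one [IsProbabilityMeasure μ] : etvDist μ ν ≤ 1 :=
  etvDist_le_iff.2 fun f _ hf1 => ((lintegral_mono hf1).trans (by simp)).trans le_add_self

theorem tvDist_nonneg (μ ν : Measure X) : 0 ≤ tvDist μ ν :=
  Real.iSup_nonneg fun _ => abs_nonneg _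

theorem tvDist_comm (μ ν : Measure X) : tvDist μ ν = tvDist ν μ := by
  simp only [tvDist, abs_sub_comm]

theorem ofReal_tvDist_le_etvDist [IsProbabilityMeasure μ] [IsProbabilityMeasure ν] :
    ENNReal.ofReal (tvDist μ ν) ≤ etvDist μ ν := by
  have hfin : etvDist μ ν ≠ ⊤ := ne_top_of_le_ne_top ENNReal.one_ne_top etvDist_le_one
  have hset : ∀ s, MeasurableSet s → μ.real s ≤ ν.real s + (etvDist μ ν).toReal := by
    intro s hs
    have h := lintegral_le_lintegral_add_etvDist (μ := μ) (ν := ν)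
      (measurable_one.indicator hs) fun x => Set.indicator_le_self' (by simp) x
    simp only [lintegral_indicator_one hs] at h
    rw [Measure.real, Measure.real, ← ENNReal.toReal_add (measure_ne_top _ _) hfin]
    exact ENNReal.toReal_mono (by finiteness) h
  refine ENNReal.ofReal_le_of_le_toReal (Real.iSup_le (fun ⟨s, hs⟩ => ?_) ENNReal.toReal_nonneg)
  have hcompl := hset sᶜ hs.compl
  rw [probReal_compl_eq_one_sub hs, probReal_compl_eq_one_sub hs] at hcompl
  change |μ.real s - ν.real s| ≤ _
  exact abs_sub_le_iff.2 ⟨by linarith [hset s hs], by linarith⟩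

end TotalVariation

section RealInequalities

theorem exp_two_mul_sq_le_one_add_four_mul_sq {t : ℝ} (ht : |t| ≤ 1 / 2) :
    Real.exp (2 * t ^ 2) ≤ 1 + 4 * t ^ 2 := by
  have ht2 : t ^ 2 ≤ 1 / 4 := by nlinarith [sq_abs t, abs_nonneg t]
  have hexp := (abs_le.1 (Real.abs_exp_sub_one_sub_id_le (x := 2 * t ^ 2)
    (by rw [abs_of_nonneg (by positivity)]; linarith))).2
  nlinarith [mul_nonneg (sq_nonneg t) (sub_nonneg.2 ht2)]

theorem two_mul_sq_le_neg_log_one_sub {t : ℝ} (h0 : 0 ≤ t) (h1 : t < 1) :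
    2 * t ^ 2 ≤ -Real.log (1 - t) := by
  have hderiv : ∀ x ∈ Set.Ico (0 : ℝ) 1,
      HasDerivAt (fun y => -Real.log (1 - y) - 2 * y ^ 2) (1 / (1 - x) - 4 * x) x := by
    intro x hx
    have hx1 : (1 : ℝ) - x ≠ 0 := by linarith [hx.2]
    have h : HasDerivAt (fun y => -Real.log (1 - y) - 2 * y ^ 2) _ x :=
      (((hasDerivAt_id x).const_sub 1).log hx1).neg.sub (((hasDerivAt_id x).pow 2).const_mul 2)
    exact h.congr_deriv (by simp; ring)
  have hmono : MonotoneOn (fun y => -Real.log (1 - y) - 2 * y ^ 2) (Set.Ico (0 : ℝ) 1) := by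
    refine monotoneOn_of_deriv_nonneg (convex_Ico 0 1)
      (fun x hx => (hderiv x hx).continuousAt.continuousWithinAt)
      (fun x hx => (hderiv x (interior_subset hx)).differentiableAt.differentiableWithinAt) ?_
    intro x hx
    have hx' := interior_subset hx
    rw [(hderiv x hx').deriv, sub_nonneg, le_div_iff₀ (by linarith [hx'.2])]
    nlinarith [sq_nonneg (1 - 2 * x)]
  have h := hmono ⟨le_rfl, one_pos⟩ ⟨h0, h1⟩ h0
  simp only [sub_zero, Real.log_one, neg_zero, ne_eq, OfNat.ofNat_ne_zero, not_false_eq_true,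
    zero_pow, mul_zero] at h
  linarith

-- For `t = q - a ≤ 1 / 2` the worst case is `a = 1 / 2`; beyond that it is `a = 1 - t`, so that
-- `q = 1`.
theorem two_mul_sq_sub_le_log_one_add {a q c : ℝ} (haq : a ≤ q) (hq : q ≤ 1)
    (hc : 0 ≤ c) (h : (q - a) ^ 2 ≤ a * (1 - a) * c) :
    2 * (q - a) ^ 2 ≤ Real.log (1 + c) := by
  obtain ⟨t, rfl⟩ : ∃ t, q = a + t := ⟨q - a, by ring⟩
  simp only [add_sub_cancel_left] at h ⊢
  have ht : 0 ≤ t := by linarith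
  rcases le_total t (1 / 2) with ht2 | ht2
  · rw [Real.le_log_iff_exp_le (by linarith)]
    refine (exp_two_mul_sq_le_one_add_four_mul_sq (abs_le.2 ⟨by linarith, ht2⟩)).trans ?_
    have hvar : a * (1 - a) ≤ 1 / 4 := by nlinarith [sq_nonneg (1 - 2 * a)]
    linarith [mul_le_mul_of_nonneg_right hvar hc]
  · have hvar : a * (1 - a) ≤ (1 - t) * t := by nlinarith
    have htc : t ≤ (1 - t) * c := by
      refine le_of_mul_le_mul_left ?_ (by linarith : 0 < t)
      linarith [mul_le_mul_of_nonneg_right hvar hc]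
    have ht1 : t < 1 := by nlinarith
    refine (two_mul_sq_le_neg_log_one_sub ht ht1).trans ?_
    rw [← Real.log_inv]
    refine Real.log_le_log (inv_pos.2 (by linarith)) ?_
    rw [inv_le_iff_one_le_mul₀ (by linarith)]
    linarith

end RealInequalities

section Lintegral

theorem sq_lintegral_mul_le {Ω : Type*} [MeasurableSpace Ω] (μ : Measure Ω) {f g : Ω → ℝ≥0∞}
    (hf : AEMeasurable f μ) (hg : AEMeasurable g μ) :
    (∫⁻ x, f x * g x ∂μ) ^ 2 ≤ (∫⁻ x, f x ^ 2 ∂μ) * ∫⁻ x, g x ^ 2 ∂μ := by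
  have hHolder := ENNReal.lintegral_mul_le_Lp_mul_Lq μ Real.HolderConjugate.two_two hf hg
  rw [← ENNReal.mul_rpow_of_nonneg _ _ (by norm_num), one_div,
    ENNReal.le_rpow_inv_iff two_pos] at hHolder
  simpa only [ENNReal.rpow_two, Pi.mul_apply] using hHolder

theorem sq_lintegral_le {Ω : Type*} [MeasurableSpace Ω] (μ : Measure Ω) [IsProbabilityMeasure μ]
    (f : Ω → ℝ≥0∞) : (∫⁻ x, f x ∂μ) ^ 2 ≤ ∫⁻ x, f x ^ 2 ∂μ := by
  obtain ⟨g, hg, hgf, hgint⟩ := exists_measurable_le_lintegral_eq μ f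
  calc (∫⁻ x, f x ∂μ) ^ 2 = (∫⁻ x, g x ∂μ) ^ 2 := by rw [hgint]
    _ ≤ ∫⁻ x, g x ^ 2 ∂μ := by
      simpa using sq_lintegral_mul_le μ hg.aemeasurable (aemeasurable_const (b := (1 : ℝ≥0∞)))
    _ ≤ ∫⁻ x, f x ^ 2 ∂μ := lintegral_mono fun x => pow_le_pow_left' (hgf x) 2

variable {ι : Type*} [Fintype ι] {Y : ι → Type*} [∀ i, MeasurableSpace (Y i)]
  (μ : ∀ i, Measure (Y i)) [∀ i, IsProbabilityMeasure (μ i)]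

theorem lintegral_pi_eval (i : ι) {f : Y i → ℝ≥0∞} (hf : Measurable f) :
    ∫⁻ x, f (x i) ∂Measure.pi μ = ∫⁻ y, f y ∂μ i :=
  (measurePreserving_eval μ i).lintegral_comp hf

theorem lintegral_pi_prod {f : ∀ i, Y i → ℝ≥0∞} (hf : ∀ i, Measurable (f i)) :
    ∫⁻ x, ∏ i, f i (x i) ∂Measure.pi μ = ∏ i, ∫⁻ y, f i y ∂μ i := by
  have hindep : iIndepFun (fun i (x : ∀ i, Y i) => f i (x i)) (Measure.pi μ) :=
    iIndepFun_pi fun i => (hf i).aemeasurable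
  rw [lintegral_prod_eq_prod_lintegral_of_indepFun Finset.univ _ hindep fun i =>
    (hf i).comp (measurable_pi_apply i)]
  exact Finset.prod_congr rfl fun i _ => lintegral_pi_eval μ i (hf i)

theorem lmarginal_le_sum_lintegral_add_sum {g : (∀ i, Y i) → ℝ≥0∞} (hg : Measurable g)
    {f : ∀ i, Y i → ℝ≥0∞} (hgf : ∀ x, g x ≤ ∑ i, f i (x i)) (s : Finset ι) (x : ∀ i, Y i) :
    (∫⋯∫⁻_s, g ∂μ) x ≤ ∑ i ∈ s, ∫⁻ y, f i y ∂μ i + ∑ i ∈ sᶜ, f i (x i) := by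
  induction s using Finset.induction generalizing x with
  | empty => simpa using hgf x
  | insert i s hi ih =>
    have hcompl : sᶜ = insert i (insert i s)ᶜ := by
      rw [Finset.compl_insert, Finset.insert_erase (Finset.mem_compl.2 hi)]
    have hupdate (y : Y i) : ∑ k ∈ sᶜ, f k (Function.update x i y k) =
        f i y + ∑ k ∈ (insert i s)ᶜ, f k (x k) := by
      rw [hcompl, Finset.sum_insert (by simp), Function.update_self]
      congr 1
      refine Finset.sum_congr rfl fun k hk => ?_
      rw [Function.update_of_ne (by rintro rfl; simp at hk)]
    calc (∫⋯∫⁻_insert i s, g ∂μ) x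
        = ∫⁻ y, (∫⋯∫⁻_s, g ∂μ) (Function.update x i y) ∂μ i := lmarginal_insert g hg hi x
      _ ≤ ∫⁻ y, (f i y + (∑ k ∈ (insert i s)ᶜ, f k (x k) + ∑ k ∈ s, ∫⁻ z, f k z ∂μ k)) ∂μ i :=
        lintegral_mono fun y => (ih _).trans_eq (by rw [hupdate, add_comm, add_assoc])
      _ = ∑ k ∈ insert i s, ∫⁻ y, f k y ∂μ k + ∑ k ∈ (insert i s)ᶜ, f k (x k) := by
        rw [lintegral_add_right _ measurable_const, lintegral_const, measure_univ, mul_one,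
          Finset.sum_insert hi]
        ring

-- `∫⁻` is not additive on nonmeasurable functions, hence the passage to a measurable minorant.
theorem lintegral_pi_sum_le (f : ∀ i, Y i → ℝ≥0∞) :
    ∫⁻ x, ∑ i, f i (x i) ∂Measure.pi μ ≤ ∑ i, ∫⁻ y, f i y ∂μ i := by
  obtain ⟨g, hg, hgf, hgint⟩ := exists_measurable_le_lintegral_eq (Measure.pi μ)
    fun x => ∑ i, f i (x i)
  obtain ⟨x⟩ : Nonempty (∀ i, Y i) := nonempty_of_isProbabilityMeasure (Measure.pi μ)
  rw [hgint]
  simpa using lmarginal_le_sum_lintegral_add_sum μ hg hgf Finset.univ x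

end Lintegral

section ProductMeasures

variable {ι : Type*} [Fintype ι] {Y : ι → Type*} [∀ i, MeasurableSpace (Y i)]

theorem pi_withDensity (μ : ∀ i, Measure (Y i)) [∀ i, IsProbabilityMeasure (μ i)]
    {D : ∀ i, Y i → ℝ≥0∞} (hD : ∀ i, Measurable (D i))
    [∀ i, SigmaFinite ((μ i).withDensity (D i))] :
    Measure.pi (fun i => (μ i).withDensity (D i)) =
      (Measure.pi μ).withDensity fun x => ∏ i, D i (x i) := by
  refine Measure.pi_eq fun s hs => ?_
  have hbox (x : ∀ i, Y i) : (Set.univ.pi s).indicator (fun x => ∏ i, D i (x i)) x =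
      ∏ i, (s i).indicator (D i) (x i) := by
    simp only [Set.indicator_apply, Set.mem_univ_pi, Finset.prod_ite_zero, Finset.mem_univ,
      true_imp_iff]
  rw [withDensity_apply _ (MeasurableSet.univ_pi hs),
    ← lintegral_indicator (MeasurableSet.univ_pi hs)]
  simp_rw [hbox, lintegral_pi_prod μ fun i => (hD i).indicator (hs i), lintegral_indicator (hs _),
    withDensity_apply _ (hs _)]

theorem pi_pi_eq {κ : ι → Type*} [∀ i, Fintype (κ i)] {X : ∀ i, κ i → Type*}
    [∀ i j, MeasurableSpace (X i j)] (μ : ∀ i j, Measure (X i j))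
    [∀ i j, IsProbabilityMeasure (μ i j)] {ν : Measure (∀ i j, X i j)}
    (h : ∀ s : ∀ i j, Set (X i j), (∀ i j, MeasurableSet (s i j)) →
      ν (Set.univ.pi fun i => Set.univ.pi (s i)) = ∏ i, ∏ j, μ i j (s i j)) :
    Measure.pi (fun i => Measure.pi (μ i)) = ν := by
  refine Measure.pi_eq_generateFrom (fun _ => generateFrom_pi) (fun _ => isPiSystem_pi)
    (fun _ => ⟨fun _ => Set.univ, fun _ => ⟨fun _ => Set.univ, by simp, by simp⟩,
      fun _ => by simp, by simp [Set.iUnion_const]⟩) fun s hs => ?_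
  choose t ht hts using hs
  obtain rfl : s = fun i => Set.univ.pi (t i) := funext fun i => (hts i).symm
  simpa only [Measure.pi_pi] using h t fun i j => ht i j trivial

/-- Exchanging the arguments of a doubly indexed family, as a measurable equivalence. It turns a
sample of vectors into a vector of samples. -/
def swapEquiv {α β : Type*} (X : α → β → Type*) [∀ a b, MeasurableSpace (X a b)] :
    (∀ a b, X a b) ≃ᵐ (∀ b a, X a b) where
  toEquiv := Equiv.piComm X
  measurable_toFun := by change Measurable fun (x : ∀ a b, X a b) b a => x a b; fun_prop
  measurable_invFun := by change Measurable fun (x : ∀ b a, X a b) a b => x b a; fun_prop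

theorem map_swapEquiv_pi {κ : Type*} [Fintype κ] {X : ι → κ → Type*}
    [∀ i j, MeasurableSpace (X i j)] (μ : ∀ i j, Measure (X i j))
    [∀ i j, IsProbabilityMeasure (μ i j)] :
    (Measure.pi fun i => Measure.pi (μ i)).map (swapEquiv X) =
      Measure.pi fun j => Measure.pi fun i => μ i j := by
  refine (pi_pi_eq (fun j i => μ i j) fun s _ => ?_).symm
  have hpre : swapEquiv X ⁻¹' (Set.univ.pi fun j => Set.univ.pi (s j)) =
      Set.univ.pi fun i => Set.univ.pi fun j => s j i := by
    ext x
    simp only [Set.mem_preimage, Set.mem_univ_pi]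
    exact forall_comm
  rw [MeasurableEquiv.map_apply, hpre]
  simp only [Measure.pi_pi]
  exact Finset.prod_comm

end ProductMeasures

section ChiSquared

variable {X : Type*} [MeasurableSpace X] {μ ν : Measure X}

theorem absolutelyContinuous_of_chiSqDiv_ne_top (h : chiSqDiv ν μ ≠ ⊤) : ν ≪ μ := by
  by_contra hac
  exact h (if_neg hac)

theorem chiSqDiv_eq_lintegral_enorm_sq (hac : ν ≪ μ) :
    chiSqDiv ν μ = ∫⁻ x, ‖(ν.rnDeriv μ x).toReal - 1‖ₑ ^ 2 ∂μ := by
  rw [chiSqDiv, if_pos hac]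
  refine lintegral_congr fun x => ?_
  rw [Real.enorm_eq_ofReal_abs, ← ENNReal.ofReal_pow (abs_nonneg _), sq_abs]

theorem one_add_chiSqDiv_withDensity [IsProbabilityMeasure μ] {D : X → ℝ≥0∞} (hD : Measurable D)
    (hD1 : ∫⁻ x, D x ∂μ = 1) : 1 + chiSqDiv (μ.withDensity D) μ = ∫⁻ x, D x ^ 2 ∂μ := by
  have hexpand : ∫⁻ x, (ENNReal.ofReal (((D x).toReal - 1) ^ 2) + 2 * D x) ∂μ =
      ∫⁻ x, (D x ^ 2 + 1) ∂μ := by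
    refine lintegral_congr_ae ?_
    filter_upwards [ae_lt_top hD (by simp [hD1])] with x hx
    lift D x to ℝ≥0 using hx.ne with y
    rw [ENNReal.coe_toReal, ← ENNReal.ofReal_coe_nnreal, ← ENNReal.ofReal_pow y.coe_nonneg,
      ← ENNReal.ofReal_one, ← ENNReal.ofReal_add (by positivity) (by positivity),
      ← ENNReal.ofReal_ofNat, ← ENNReal.ofReal_mul (by positivity),
      ← ENNReal.ofReal_add (by positivity) (by positivity)]
    congr 1
    ring
  have hchi : chiSqDiv (μ.withDensity D) μ =
      ∫⁻ x, ENNReal.ofReal (((D x).toReal - 1) ^ 2) ∂μ := by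
    rw [chiSqDiv, if_pos (withDensity_absolutelyContinuous μ D)]
    refine lintegral_congr_ae ?_
    filter_upwards [μ.rnDeriv_withDensity hD] with x hx
    rw [hx]
  rw [lintegral_add_right _ measurable_const, lintegral_add_right _ (by fun_prop),
    lintegral_const_mul _ hD, hD1, lintegral_one, measure_univ, ← hchi] at hexpand
  refine (ENNReal.add_left_inj ENNReal.one_ne_top).1 (Eq.trans ?_ hexpand)
  rw [mul_one, ← one_add_one_eq_two]
  ring

theorem one_add_chiSqDiv_pi {ι : Type*} [Fintype ι] {Y : ι → Type*} [∀ i, MeasurableSpace (Y i)]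
    {μ ν : ∀ i, Measure (Y i)} [∀ i, IsProbabilityMeasure (μ i)]
    [∀ i, IsProbabilityMeasure (ν i)] (hac : ∀ i, ν i ≪ μ i) :
    1 + chiSqDiv (Measure.pi ν) (Measure.pi μ) = ∏ i, (1 + chiSqDiv (ν i) (μ i)) := by
  obtain ⟨D, hD, hνD⟩ : ∃ D : ∀ i, Y i → ℝ≥0∞, (∀ i, Measurable (D i)) ∧
      ∀ i, ν i = (μ i).withDensity (D i) :=
    ⟨fun i => (ν i).rnDeriv (μ i), fun i => (ν i).measurable_rnDeriv (μ i), fun i =>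
      (Measure.withDensity_rnDeriv_eq _ _ (hac i)).symm⟩
  have hD1 (i : ι) : ∫⁻ y, D i y ∂μ i = 1 := by
    rw [← setLIntegral_univ, ← withDensity_apply _ MeasurableSet.univ, ← hνD, measure_univ]
  obtain rfl : ν = fun i => (μ i).withDensity (D i) := funext hνD
  rw [pi_withDensity μ hD, one_add_chiSqDiv_withDensity (by fun_prop)
    (by rw [lintegral_pi_prod μ hD]; exact Finset.prod_eq_one fun i _ => hD1 i)]
  simp_rw [← Finset.prod_pow]
  rw [lintegral_pi_prod μ fun i => (hD i).pow_const 2]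
  exact Finset.prod_congr rfl fun i _ => (one_add_chiSqDiv_withDensity (hD i) (hD1 i)).symm

theorem enorm_integral_sub_integral_sq_le [IsProbabilityMeasure μ] [IsProbabilityMeasure ν]
    (hac : ν ≪ μ) {f : X → ℝ} (hfμ : Integrable f μ) (hfν : Integrable f ν) :
    ‖∫ x, f x ∂ν - ∫ x, f x ∂μ‖ₑ ^ 2 ≤ evariance f μ * chiSqDiv ν μ := by
  set a : ℝ := ∫ x, f x ∂μ
  set Z : X → ℝ := fun x => (ν.rnDeriv μ x).toReal
  have hZ : Measurable Z := (ν.measurable_rnDeriv μ).ennreal_toReal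
  have hcov : ∫ x, (f x - a) * (Z x - 1) ∂μ = ∫ x, f x ∂ν - a := by
    calc ∫ x, (f x - a) * (Z x - 1) ∂μ = ∫ x, (Z x * (f x - a) - (f x - a)) ∂μ := by
          congr with x; ring
      _ = ∫ x, Z x * (f x - a) ∂μ - ∫ x, (f x - a) ∂μ :=
        integral_sub ((integrable_rnDeriv_smul_iff hac).2 (hfν.sub (integrable_const a)))
          (hfμ.sub (integrable_const a))
      _ = ∫ x, (f x - a) ∂ν - 0 := by
        rw [integral_toReal_rnDeriv_mul hac, integral_sub hfμ (integrable_const a)]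
        simp [a]
      _ = ∫ x, f x ∂ν - a := by rw [sub_zero, integral_sub hfν (integrable_const a)]; simp
  calc ‖∫ x, f x ∂ν - a‖ₑ ^ 2 ≤ (∫⁻ x, ‖f x - a‖ₑ * ‖Z x - 1‖ₑ ∂μ) ^ 2 := by
        rw [← hcov]
        simp_rw [← enorm_mul]
        gcongr
        exact enorm_integral_le_lintegral_enorm _
    _ ≤ (∫⁻ x, ‖f x - a‖ₑ ^ 2 ∂μ) * ∫⁻ x, ‖Z x - 1‖ₑ ^ 2 ∂μ :=
      sq_lintegral_mul_le μ (hfμ.aemeasurable.sub_const a).enorm (hZ.sub_const 1).enorm.aemeasurable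
    _ = evariance f μ * chiSqDiv ν μ := by rw [evariance, chiSqDiv_eq_lintegral_enorm_sq hac]

theorem sq_integral_sub_integral_le [IsProbabilityMeasure μ] [IsProbabilityMeasure ν]
    (hchi : chiSqDiv ν μ ≠ ⊤) {f : X → ℝ} (hf : Measurable f) (hf01 : ∀ x, f x ∈ Set.Icc 0 1) :
    (∫ x, f x ∂ν - ∫ x, f x ∂μ) ^ 2 ≤
      (∫ x, f x ∂μ) * (1 - ∫ x, f x ∂μ) * (chiSqDiv ν μ).toReal := by
  have hintegrable (ρ : Measure X) [IsProbabilityMeasure ρ] : Integrable f ρ :=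
    .of_mem_Icc 0 1 hf.aemeasurable (.of_forall hf01)
  have hL2 : MemLp f 2 μ := memLp_of_bounded (.of_forall hf01) hf.aestronglyMeasurable 2
  have hHCR := enorm_integral_sub_integral_sq_le (absolutelyContinuous_of_chiSqDiv_ne_top hchi)
    (hintegrable μ) (hintegrable ν)
  have hvar : variance f μ ≤ (∫ x, f x ∂μ) * (1 - ∫ x, f x ∂μ) := by
    have hBhatiaDavis := variance_le_sub_mul_sub (.of_forall hf01) hf.aemeasurable (μ := μ)
    linarith
  rw [← hL2.ofReal_variance_eq, ← ENNReal.ofReal_toReal hchi, ← ENNReal.ofReal_mul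
    (variance_nonneg f μ), Real.enorm_eq_ofReal_abs, ← ENNReal.ofReal_pow (abs_nonneg _), sq_abs,
    ENNReal.ofReal_le_ofReal_iff (mul_nonneg (variance_nonneg f μ) ENNReal.toReal_nonneg)] at hHCR
  exact hHCR.trans (mul_le_mul_of_nonneg_right hvar ENNReal.toReal_nonneg)

theorem two_mul_etvDist_sq_le_log_one_add_chiSqDiv [IsProbabilityMeasure μ]
    [IsProbabilityMeasure ν] (hchi : chiSqDiv ν μ ≠ ⊤) :
    2 * etvDist ν μ ^ 2 ≤ ENNReal.ofReal (Real.log (1 + chiSqDiv ν μ).toReal) := by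
  set c := (chiSqDiv ν μ).toReal with hc
  have hc0 : 0 ≤ c := ENNReal.toReal_nonneg
  rw [ENNReal.toReal_add ENNReal.one_ne_top hchi, ENNReal.toReal_one, ← hc]
  have hsqrt : etvDist ν μ ≤ ENNReal.ofReal √(Real.log (1 + c) / 2) := by
    refine etvDist_le_iff.2 fun f hf hf1 => ?_
    have htoReal (ρ : Measure X) [IsProbabilityMeasure ρ] :
        ∫⁻ x, f x ∂ρ = ENNReal.ofReal (∫ x, (f x).toReal ∂ρ) := by
      rw [integral_toReal hf.aemeasurable
        (.of_forall fun x => (hf1 x).trans_lt ENNReal.one_lt_top), ENNReal.ofReal_toReal]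
      exact ne_top_of_le_ne_top ENNReal.one_ne_top ((lintegral_mono hf1).trans (by simp))
    have hf01 (x : X) : (f x).toReal ∈ Set.Icc (0 : ℝ) 1 :=
      ⟨ENNReal.toReal_nonneg, ENNReal.toReal_le_of_le_ofReal zero_le_one (by simpa using hf1 x)⟩
    have hintegrable (ρ : Measure X) [IsProbabilityMeasure ρ] :
        Integrable (fun x => (f x).toReal) ρ :=
      .of_mem_Icc 0 1 hf.ennreal_toReal.aemeasurable (.of_forall hf01)
    have hcov := sq_integral_sub_integral_le hchi hf.ennreal_toReal hf01
    rw [htoReal μ, htoReal ν, ← ENNReal.ofReal_add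
      (integral_nonneg fun _ => ENNReal.toReal_nonneg) (Real.sqrt_nonneg _)]
    refine ENNReal.ofReal_le_ofReal (sub_le_iff_le_add'.1 ?_)
    rcases le_total (∫ x, (f x).toReal ∂ν) (∫ x, (f x).toReal ∂μ) with hle | hle
    · exact (sub_nonpos.2 hle).trans (Real.sqrt_nonneg _)
    · have hν1 : ∫ x, (f x).toReal ∂ν ≤ 1 :=
        (integral_mono (hintegrable ν) (integrable_const 1) fun x => (hf01 x).2).trans (by simp)
      refine Real.le_sqrt_of_sq_le ?_
      linarith [two_mul_sq_sub_le_log_one_add hle hν1 hc0 hcov]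
  calc 2 * etvDist ν μ ^ 2 ≤ 2 * ENNReal.ofReal √(Real.log (1 + c) / 2) ^ 2 := by gcongr
    _ = ENNReal.ofReal (Real.log (1 + c)) := by
      rw [← ENNReal.ofReal_pow (Real.sqrt_nonneg _), Real.sq_sqrt
        (div_nonneg (Real.log_nonneg (by linarith)) two_pos.le), ← ENNReal.ofReal_ofNat,
        ← ENNReal.ofReal_mul two_pos.le, mul_div_cancel₀ _ two_ne_zero]

theorem two_mul_etvDist_pi_sq_le {ι : Type*} [Fintype ι] {Y : ι → Type*}
    [∀ i, MeasurableSpace (Y i)] (ν μ : ∀ i, Measure (Y i)) [∀ i, IsProbabilityMeasure (μ i)]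
    [∀ i, IsProbabilityMeasure (ν i)] :
    2 * etvDist (Measure.pi ν) (Measure.pi μ) ^ 2 ≤ ∑ i, chiSqDiv (ν i) (μ i) := by
  rcases eq_or_ne (∑ i, chiSqDiv (ν i) (μ i)) ⊤ with htop | htop
  · exact htop ▸ le_top
  have hfin (i : ι) : chiSqDiv (ν i) (μ i) ≠ ⊤ := (ENNReal.sum_ne_top.1 htop) i (Finset.mem_univ i)
  have hpi := one_add_chiSqDiv_pi fun i => absolutelyContinuous_of_chiSqDiv_ne_top (hfin i)
  have hpifin : chiSqDiv (Measure.pi ν) (Measure.pi μ) ≠ ⊤ :=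
    (ENNReal.add_ne_top.1 (hpi.trans_ne (ENNReal.prod_ne_top fun i _ => by
      simp [hfin i]))).2
  have htoReal (i : ι) : (1 + chiSqDiv (ν i) (μ i)).toReal = 1 + (chiSqDiv (ν i) (μ i)).toReal :=
    ENNReal.toReal_add ENNReal.one_ne_top (hfin i)
  have hpos (i : ι) : 0 < 1 + (chiSqDiv (ν i) (μ i)).toReal := by positivity
  refine (two_mul_etvDist_sq_le_log_one_add_chiSqDiv hpifin).trans
    (ENNReal.ofReal_le_of_le_toReal ?_)
  rw [hpi, ENNReal.toReal_prod, ENNReal.toReal_sum fun i _ => hfin i]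
  simp_rw [htoReal]
  rw [Real.log_prod fun i _ => (hpos i).ne']
  refine Finset.sum_le_sum fun i _ => ?_
  linarith [Real.log_le_sub_one_of_pos (hpos i)]

end ChiSquared

section SampleMean

variable {ι X : Type*} [Fintype ι] [MeasurableSpace X] (μ : Measure X) [IsProbabilityMeasure μ]

theorem lintegral_pi_mul_of_ne {i j : ι} (hij : i ≠ j) {f g : X → ℝ≥0∞} (hf : Measurable f)
    (hg : Measurable g) :
    ∫⁻ x, f (x i) * g (x j) ∂(Measure.pi fun _ : ι => μ) = (∫⁻ x, f x ∂μ) * ∫⁻ x, g x ∂μ := by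
  have hindep : IndepFun (fun x : ι → X => x i) (fun x => x j) (Measure.pi fun _ => μ) :=
    (iIndepFun_pi (X := fun _ x => x) fun _ => aemeasurable_id).indepFun hij
  have hprod := lintegral_mul_eq_lintegral_mul_lintegral_of_indepFun
    (hf.comp (measurable_pi_apply i)) (hg.comp (measurable_pi_apply j)) (hindep.comp hf hg)
  simpa only [Pi.mul_apply, Function.comp_apply, lintegral_pi_eval (fun _ : ι => μ) _ hf,
    lintegral_pi_eval (fun _ : ι => μ) _ hg] using hprod

variable [Nonempty ι] {D : X → ℝ≥0∞}

theorem lintegral_pi_mean (hD : Measurable D) :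
    ∫⁻ x, (Fintype.card ι : ℝ≥0∞)⁻¹ * ∑ i, D (x i) ∂(Measure.pi fun _ : ι => μ) =
      ∫⁻ x, D x ∂μ := by
  rw [lintegral_const_mul _ (by fun_prop), lintegral_finsetSum _ fun i _ => by fun_prop]
  simp_rw [lintegral_pi_eval (fun _ : ι => μ) _ hD]
  rw [Finset.sum_const, Finset.card_univ, nsmul_eq_mul, ← mul_assoc,
    ENNReal.inv_mul_cancel (by simp) (by finiteness), one_mul]

theorem lintegral_pi_mean_sq (hD : Measurable D) (hD1 : ∫⁻ x, D x ∂μ = 1) {c : ℝ≥0∞}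
    (hD2 : ∫⁻ x, D x ^ 2 ∂μ = 1 + c) :
    ∫⁻ x, ((Fintype.card ι : ℝ≥0∞)⁻¹ * ∑ i, D (x i)) ^ 2 ∂(Measure.pi fun _ : ι => μ) =
      1 + (Fintype.card ι : ℝ≥0∞)⁻¹ * c := by
  have hpair (i j : ι) : ∫⁻ x, D (x i) * D (x j) ∂(Measure.pi fun _ : ι => μ) =
      1 + if i = j then c else 0 := by
    split_ifs with hij
    · subst hij
      simp_rw [← sq]
      rw [lintegral_pi_eval (fun _ : ι => μ) i (hD.pow_const 2), hD2]
    · rw [lintegral_pi_mul_of_ne μ hij hD hD, hD1, one_mul, add_zero]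
  simp_rw [mul_pow, sq (∑ _, D _), Finset.sum_mul_sum]
  rw [lintegral_const_mul _ (by fun_prop), lintegral_finsetSum _ fun i _ => by fun_prop]
  have hrow (i : ι) : ∫⁻ x, ∑ j, D (x i) * D (x j) ∂(Measure.pi fun _ : ι => μ) =
      Fintype.card ι + c := by
    rw [lintegral_finsetSum _ fun j _ => by fun_prop]
    simp [hpair, Finset.sum_add_distrib]
  simp_rw [hrow]
  rw [Finset.sum_const, Finset.card_univ, nsmul_eq_mul]
  have hcancel : (Fintype.card ι : ℝ≥0∞)⁻¹ * Fintype.card ι = 1 :=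
    ENNReal.inv_mul_cancel (by simp) (by finiteness)
  generalize (Fintype.card ι : ℝ≥0∞) = N at *
  calc N⁻¹ ^ 2 * (N * (N + c)) = N⁻¹ * N * (N⁻¹ * N + N⁻¹ * c) := by ring
    _ = 1 + N⁻¹ * c := by rw [hcancel, one_mul]

theorem chiSqDiv_withDensity_mean (hD : Measurable D) (hD1 : ∫⁻ x, D x ∂μ = 1) :
    chiSqDiv ((Measure.pi fun _ : ι => μ).withDensity
        fun x => (Fintype.card ι : ℝ≥0∞)⁻¹ * ∑ i, D (x i)) (Measure.pi fun _ : ι => μ) =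
      (Fintype.card ι : ℝ≥0∞)⁻¹ * chiSqDiv (μ.withDensity D) μ := by
  refine (ENNReal.add_right_inj ENNReal.one_ne_top).1 ?_
  rw [one_add_chiSqDiv_withDensity (by fun_prop) ((lintegral_pi_mean μ hD).trans hD1),
    lintegral_pi_mean_sq μ hD hD1 (one_add_chiSqDiv_withDensity hD hD1).symm]

end SampleMean

section Insertion

variable (X : Type*) [MeasurableSpace X] (M : ℕ)

/-- The Markov kernel inserting a point into a sample of size `M` at a uniformly random position. -/
noncomputable def insertKernel : Kernel (X × (Fin M → X)) (Fin (M + 1) → X) where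
  toFun z := (Fintype.card (Fin (M + 1)) : ℝ≥0∞)⁻¹ • ∑ k : Fin (M + 1),
    Measure.dirac ((MeasurableEquiv.piFinSuccAbove (fun _ => X) k).symm z)
  measurable' := by
    refine Measure.measurable_of_measurable_coe _ fun s hs => ?_
    simp only [Measure.smul_apply, Measure.finsetSum_apply, smul_eq_mul]
    exact (Finset.measurable_sum _ fun k _ => (Measure.measurable_coe hs).comp
      (Measure.measurable_dirac.comp (MeasurableEquiv.measurable _))).const_mul _

variable {X M}

theorem insertKernel_comp (μ : Measure (X × (Fin M → X))) :
    insertKernel X M ∘ₘ μ = (Fintype.card (Fin (M + 1)) : ℝ≥0∞)⁻¹ •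
      ∑ k : Fin (M + 1), μ.map (MeasurableEquiv.piFinSuccAbove (fun _ => X) k).symm := by
  ext s hs
  rw [Measure.bind_apply hs (insertKernel X M).aemeasurable]
  simp only [insertKernel, Kernel.coe_mk, Measure.smul_apply, Measure.finsetSum_apply,
    MeasurableEquiv.map_apply, smul_eq_mul, Measure.dirac_apply' _ hs]
  have hm (k : Fin (M + 1)) : Measurable fun z => s.indicator (1 : (Fin (M + 1) → X) → ℝ≥0∞)
      ((MeasurableEquiv.piFinSuccAbove (fun _ => X) k).symm z) :=
    (measurable_one.indicator hs).comp (MeasurableEquiv.measurable _)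
  rw [lintegral_const_mul _ (Finset.measurable_sum _ fun k _ => hm k),
    lintegral_finsetSum _ fun k _ => hm k]
  congr! with k
  exact lintegral_indicator_one ((MeasurableEquiv.measurable _) hs)

instance isMarkovKernel_insertKernel : IsMarkovKernel (insertKernel X M) := by
  refine ⟨fun z => ⟨?_⟩⟩
  have hcancel : ((M : ℝ≥0∞) + 1)⁻¹ * (M + 1) = 1 :=
    ENNReal.inv_mul_cancel (by simp) (by finiteness)
  simpa [insertKernel] using hcancel

theorem insertKernel_comp_withDensity_prod (μ : Measure X) [IsProbabilityMeasure μ] {D : X → ℝ≥0∞}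
    (hD : Measurable D) [SFinite (μ.withDensity D)] :
    insertKernel X M ∘ₘ (μ.withDensity D).prod (Measure.pi fun _ : Fin M => μ) =
      (Measure.pi fun _ : Fin (M + 1) => μ).withDensity
        fun x => (Fintype.card (Fin (M + 1)) : ℝ≥0∞)⁻¹ * ∑ k, D (x k) := by
  have hmap (k : Fin (M + 1)) : ((μ.withDensity D).prod (Measure.pi fun _ : Fin M => μ)).map
      (MeasurableEquiv.piFinSuccAbove (fun _ => X) k).symm =
        (Measure.pi fun _ : Fin (M + 1) => μ).withDensity fun x => D (x k) := by
    have hmp := (measurePreserving_piFinSuccAbove (fun _ : Fin (M + 1) => μ) k).symm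
    ext s hs
    rw [prod_withDensity_left hD, MeasurableEquiv.map_apply,
      withDensity_apply _ (hmp.measurable hs), withDensity_apply _ hs,
      ← hmp.setLIntegral_comp_preimage hs (by fun_prop)]
    simp only [MeasurableEquiv.piFinSuccAbove_symm_apply, Fin.insertNthEquiv_apply,
      Fin.insertNth_apply_same]
  simp_rw [insertKernel_comp, hmap]
  ext s hs
  simp only [Measure.smul_apply, Measure.finsetSum_apply, withDensity_apply _ hs, smul_eq_mul]
  rw [lintegral_const_mul _ (by fun_prop), lintegral_finsetSum _ fun k _ => by fun_prop]

theorem chiSqDiv_insertKernel_comp_le (μ ν : Measure X) [IsProbabilityMeasure μ]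
    [IsProbabilityMeasure ν] :
    chiSqDiv (insertKernel X M ∘ₘ ν.prod (Measure.pi fun _ : Fin M => μ))
      (Measure.pi fun _ : Fin (M + 1) => μ) ≤ (M + 1 : ℝ≥0∞)⁻¹ * chiSqDiv ν μ := by
  by_cases hac : ν ≪ μ
  · have hden : μ.withDensity (ν.rnDeriv μ) = ν := Measure.withDensity_rnDeriv_eq _ _ hac
    have hone : ∫⁻ x, ν.rnDeriv μ x ∂μ = 1 := by rw [Measure.lintegral_rnDeriv hac, measure_univ]
    have h := insertKernel_comp_withDensity_prod (M := M) μ (ν.measurable_rnDeriv μ)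
    rw [hden] at h
    rw [h, chiSqDiv_withDensity_mean μ (ν.measurable_rnDeriv μ) hone, hden]
    simp
  · rw [chiSqDiv, chiSqDiv, if_neg hac, ENNReal.mul_top (by simp)]
    exact le_top

end Insertion

section CoordinatewiseKernels

variable {ι : Type*} [Fintype ι] {Z Y : ι → Type*} [∀ i, MeasurableSpace (Z i)]
  [∀ i, MeasurableSpace (Y i)]

/-- The kernel applying `κ i` to the `i`-th coordinate, independently over the coordinates. -/
noncomputable def piKernel (κ : ∀ i, Kernel (Z i) (Y i)) [∀ i, IsMarkovKernel (κ i)] :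
    Kernel (∀ i, Z i) (∀ i, Y i) where
  toFun z := Measure.pi fun i => κ i (z i)
  measurable' := by
    refine Measurable.measure_of_isPiSystem_of_isProbabilityMeasure generateFrom_pi.symm
      isPiSystem_pi ?_
    rintro _ ⟨s, hs, rfl⟩
    simp_rw [Measure.pi_pi]
    exact Finset.measurable_prod _ fun i _ =>
      ((κ i).measurable_coe (hs i trivial)).comp (measurable_pi_apply i)

variable (κ : ∀ i, Kernel (Z i) (Y i)) [∀ i, IsMarkovKernel (κ i)]

theorem piKernel_apply (z : ∀ i, Z i) : piKernel κ z = Measure.pi fun i => κ i (z i) := rfl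

instance isMarkovKernel_piKernel : IsMarkovKernel (piKernel κ) :=
  ⟨fun z => by rw [piKernel_apply]; infer_instance⟩

theorem piKernel_comp_pi (μ : ∀ i, Measure (Z i)) [∀ i, IsProbabilityMeasure (μ i)] :
    piKernel κ ∘ₘ Measure.pi μ = Measure.pi fun i => κ i ∘ₘ μ i := by
  refine (Measure.pi_eq fun s hs => ?_).symm
  rw [Measure.bind_apply (MeasurableSet.univ_pi hs) (piKernel κ).aemeasurable]
  simp_rw [piKernel_apply, Measure.pi_pi, fun i => Measure.bind_apply (hs i) (κ i).aemeasurable]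
  exact lintegral_pi_prod μ fun i => (κ i).measurable_coe (hs i)

end CoordinatewiseKernels

section InsertionStep

variable {ι A : Type*} [Fintype ι] {X : ι → Type*} [MeasurableSpace A] [∀ j, MeasurableSpace (X j)]
  (κ : ∀ j, Kernel A (X j)) [∀ j, IsMarkovKernel (κ j)] (M : ℕ)

/-- One amplification step: given `a` and a sample of `M` vectors, independently in each coordinate
`j` draw a point from `κ j a` and insert it into the sample of `j`-th coordinates at a uniformly
random position. -/
noncomputable def insertStep :
    Kernel (A × (Fin M → ∀ j, X j)) (Fin (M + 1) → ∀ j, X j) :=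
  ((piKernel fun j => insertKernel (X j) M ∘ₖ (κ j ∥ₖ Kernel.id)).comap
    (fun z j => (z.1, fun i => z.2 i j)) (by fun_prop)).map (swapEquiv fun j _ => X j)

instance isMarkovKernel_insertStep : IsMarkovKernel (insertStep κ M) :=
  Kernel.IsMarkovKernel.map _ (MeasurableEquiv.measurable _)

theorem insertStep_comp_dirac_prod (P : ∀ j, Measure (X j)) [∀ j, IsProbabilityMeasure (P j)]
    (a : A) :
    insertStep κ M ∘ₘ (Measure.dirac a).prod (Measure.pi fun _ => Measure.pi P) =
      (Measure.pi fun j => insertKernel (X j) M ∘ₘ (κ j a).prod (Measure.pi fun _ => P j)).map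
        (swapEquiv fun j _ => X j) := by
  have hinput : ((Measure.dirac a).prod (Measure.pi fun _ : Fin M => Measure.pi P)).map
      (fun z j => (z.1, fun i => z.2 i j)) =
        Measure.pi fun j => (Measure.dirac a).prod (Measure.pi fun _ => P j) := by
    simp_rw [Measure.dirac_prod]
    rw [← Measure.pi_map_pi fun j => by fun_prop, ← map_swapEquiv_pi,
      Measure.map_map (by fun_prop) (by fun_prop), Measure.map_map (by fun_prop) (by fun_prop)]
    rfl
  have hcoord (j : ι) : insertKernel (X j) M ∘ₘ (κ j a).prod (Measure.pi fun _ => P j) =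
      (insertKernel (X j) M ∘ₖ (κ j ∥ₖ Kernel.id)) ∘ₘ
        (Measure.dirac a).prod (Measure.pi fun _ => P j) := by
    rw [← Measure.comp_assoc, ← Measure.prod_comp_left, Measure.dirac_bind (κ j).measurable]
  simp_rw [hcoord]
  rw [← piKernel_comp_pi, ← hinput, insertStep, ← Measure.map_comp _ _ (by fun_prop),
    ← Kernel.comp_deterministic_eq_comap, ← Measure.comp_assoc, Measure.deterministic_comp_eq_map]

theorem two_mul_etvDist_insertStep_comp_sq_le (P : ∀ j, Measure (X j))
    [∀ j, IsProbabilityMeasure (P j)] (a : A) :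
    2 * etvDist (insertStep κ M ∘ₘ (Measure.dirac a).prod (Measure.pi fun _ => Measure.pi P))
        (Measure.pi fun _ => Measure.pi P) ^ 2 ≤
      (M + 1 : ℝ≥0∞)⁻¹ * ∑ j, chiSqDiv (κ j a) (P j) := by
  rw [insertStep_comp_dirac_prod, ← map_swapEquiv_pi fun (j : ι) (_ : Fin (M + 1)) => P j,
    Finset.mul_sum]
  calc 2 * etvDist _ _ ^ 2
      ≤ 2 * etvDist (Measure.pi fun j =>
          insertKernel (X j) M ∘ₘ (κ j a).prod (Measure.pi fun _ => P j))
          (Measure.pi fun j => Measure.pi fun _ => P j) ^ 2 := by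
        gcongr
        exact etvDist_map_le (MeasurableEquiv.measurable _)
    _ ≤ ∑ j, chiSqDiv (insertKernel (X j) M ∘ₘ (κ j a).prod (Measure.pi fun _ => P j))
          (Measure.pi fun _ => P j) := two_mul_etvDist_pi_sq_le _ _
    _ ≤ ∑ j, (M + 1 : ℝ≥0∞)⁻¹ * chiSqDiv (κ j a) (P j) :=
        Finset.sum_le_sum fun j _ => chiSqDiv_insertKernel_comp_le (P j) (κ j a)

end InsertionStep

section SideInformation

variable {A Z W : Type*} [MeasurableSpace A] [MeasurableSpace Z] [MeasurableSpace W]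

theorem deterministic_fst_prod_comp_prod (C : Kernel (A × Z) W) [IsSFiniteKernel C]
    (μ : Measure A) [SFinite μ] (ν : Measure Z) [SFinite ν] :
    (Kernel.deterministic Prod.fst measurable_fst ×ₖ C) ∘ₘ μ.prod ν =
      μ ⊗ₘ (C ∘ₖ (Kernel.id ×ₖ Kernel.const A ν)) := by
  refine Measure.ext_of_lintegral _ fun f hf => ?_
  rw [Measure.lintegral_bind (Kernel.aemeasurable _) hf.aemeasurable,
    lintegral_prod _ hf.lintegral_kernel.aemeasurable, Measure.lintegral_compProd hf]
  refine lintegral_congr fun a => ?_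
  have hfa : Measurable fun w => f (a, w) := hf.comp measurable_prodMk_left
  rw [Kernel.lintegral_comp _ _ _ hfa, Kernel.lintegral_id_prod hfa.lintegral_kernel,
    Kernel.const_apply]
  exact lintegral_congr fun z => Kernel.lintegral_deterministic_prod _ C (a, z) hf

theorem comp_id_prod_const_apply (C : Kernel (A × Z) W) (ν : Measure Z) [SFinite ν] (a : A) :
    (C ∘ₖ (Kernel.id ×ₖ Kernel.const A ν)) a = C ∘ₘ (Measure.dirac a).prod ν := by
  rw [Kernel.comp_apply, Kernel.prod_apply, Kernel.id_apply, Kernel.const_apply]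

theorem etvDist_deterministic_fst_prod_comp_prod_le (C : Kernel (A × Z) W) [IsSFiniteKernel C]
    (μ : Measure A) [SFinite μ] (ν : Measure Z) [SFinite ν] (ρ : Measure W) [SFinite ρ] :
    etvDist ((Kernel.deterministic Prod.fst measurable_fst ×ₖ C) ∘ₘ μ.prod ν) (μ.prod ρ) ≤
      ∫⁻ a, etvDist (C ∘ₘ (Measure.dirac a).prod ν) ρ ∂μ := by
  rw [deterministic_fst_prod_comp_prod, ← Measure.compProd_const]
  simpa only [comp_id_prod_const_apply, Kernel.const_apply]
    using etvDist_compProd_le (μ := μ) (C ∘ₖ (Kernel.id ×ₖ Kernel.const A ν)) (Kernel.const A ρ)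

theorem deterministic_fst_prod_comp_dirac_prod (C : Kernel (A × Z) W) [IsSFiniteKernel C]
    (a : A) (ν : Measure Z) [SFinite ν] :
    (Kernel.deterministic Prod.fst measurable_fst ×ₖ C) ∘ₘ (Measure.dirac a).prod ν =
      (Measure.dirac a).prod (C ∘ₘ (Measure.dirac a).prod ν) := by
  rw [deterministic_fst_prod_comp_prod, ← comp_id_prod_const_apply]
  refine Measure.ext_of_lintegral _ fun f hf => ?_
  rw [Measure.lintegral_compProd hf, lintegral_prod _ hf.aemeasurable,
    lintegral_dirac' _ hf.lintegral_kernel_prod_right', lintegral_dirac' _ hf.lintegral_prod_right']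

end SideInformation

section Iteration

variable {A : Type*} [MeasurableSpace A] {Z : ℕ → Type*} [∀ i, MeasurableSpace (Z i)]
  (S : ∀ i, Kernel (A × Z i) (Z (i + 1)))

/-- The first `m` steps of the Markov chain with transition kernels `S i`, all of which read the
same side information in `A`. -/
noncomputable def iterateKernel : ∀ m, Kernel (A × Z 0) (Z m)
  | 0 => Kernel.deterministic Prod.snd measurable_snd
  | m + 1 => S m ∘ₖ (Kernel.deterministic Prod.fst measurable_fst ×ₖ iterateKernel m)

variable [∀ i, IsMarkovKernel (S i)]

instance isMarkovKernel_iterateKernel (m : ℕ) : IsMarkovKernel (iterateKernel S m) := by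
  induction m with
  | zero => rw [iterateKernel]; infer_instance
  | succ m ih => rw [iterateKernel]; infer_instance

theorem etvDist_iterateKernel_comp_le (μ : ∀ i, Measure (Z i)) [∀ i, IsProbabilityMeasure (μ i)]
    (a : A) (m : ℕ) :
    etvDist (iterateKernel S m ∘ₘ (Measure.dirac a).prod (μ 0)) (μ m) ≤
      ∑ i ∈ Finset.range m, etvDist (S i ∘ₘ (Measure.dirac a).prod (μ i)) (μ (i + 1)) := by
  induction m with
  | zero =>
    rw [iterateKernel, Measure.deterministic_comp_eq_map, Measure.map_snd_prod]
    simp [etvDist_self]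
  | succ m ih =>
    rw [Finset.sum_range_succ, iterateKernel, ← Measure.comp_assoc,
      deterministic_fst_prod_comp_dirac_prod]
    refine (etvDist_triangle _ (S m ∘ₘ (Measure.dirac a).prod (μ m)) _).trans ?_
    gcongr
    refine (etvDist_comp_le (S m)).trans (le_trans ?_ ih)
    simp_rw [Measure.dirac_prod]
    exact etvDist_map_le measurable_prodMk_left

end Iteration

section Amplification

variable {ι A : Type*} [Fintype ι] {X : ι → Type*} [MeasurableSpace A] [∀ j, MeasurableSpace (X j)]
  (κ : ∀ j, Kernel A (X j)) [∀ j, IsMarkovKernel (κ j)] (k m : ℕ)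

/-- The enlargement of a sample of size `k` to size `k + m` by `m` insertion steps. -/
noncomputable def insertMany :
    Kernel (A × (Fin k → ∀ j, X j)) (Fin (k + m) → ∀ j, X j) :=
  iterateKernel (Z := fun i => Fin (k + i) → ∀ j, X j) (fun i => insertStep κ (k + i)) m

instance isMarkovKernel_insertMany : IsMarkovKernel (insertMany κ k m) :=
  inferInstanceAs (IsMarkovKernel (iterateKernel _ m))

theorem etvDist_insertMany_comp_sq_le (P : ∀ j, Measure (X j))
    [∀ j, IsProbabilityMeasure (P j)] (a : A) :
    etvDist (insertMany κ k m ∘ₘ (Measure.dirac a).prod (Measure.pi fun _ => Measure.pi P))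
        (Measure.pi fun _ => Measure.pi P) ^ 2 ≤
      m ^ 2 / (2 * (k + 1)) * ∑ j, chiSqDiv (κ j a) (P j) := by
  set step : ℕ → ℝ≥0∞ := fun i => etvDist
    (insertStep κ (k + i) ∘ₘ (Measure.dirac a).prod (Measure.pi fun _ => Measure.pi P))
    (Measure.pi fun _ => Measure.pi P)
  have hstep (i : ℕ) : 2 * step i ^ 2 ≤ (k + 1 : ℝ≥0∞)⁻¹ * ∑ j, chiSqDiv (κ j a) (P j) := by
    refine (two_mul_etvDist_insertStep_comp_sq_le κ (k + i) P a).trans ?_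
    gcongr
    simp
  have hsum : etvDist (insertMany κ k m ∘ₘ
      (Measure.dirac a).prod (Measure.pi fun _ => Measure.pi P))
      (Measure.pi fun _ => Measure.pi P) ≤ ∑ i ∈ Finset.range m, step i :=
    etvDist_iterateKernel_comp_le (Z := fun i => Fin (k + i) → ∀ j, X j) _
      (fun i => Measure.pi fun _ => Measure.pi P) a m
  have hpower : (∑ i ∈ Finset.range m, step i) ^ 2 ≤ m * ∑ i ∈ Finset.range m, step i ^ 2 := by
    have h := ENNReal.rpow_sum_le_const_mul_sum_rpow (Finset.range m) step one_le_two
    simpa only [ENNReal.rpow_two, Finset.card_range, show (2 : ℝ) - 1 = 1 by norm_num,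
      ENNReal.rpow_one] using h
  rw [div_eq_mul_inv, ENNReal.mul_inv (by simp) (by simp), mul_left_comm, mul_assoc,
    ← ENNReal.mul_le_iff_le_inv two_ne_zero ENNReal.ofNat_ne_top]
  calc 2 * etvDist _ _ ^ 2 ≤ 2 * (m * ∑ i ∈ Finset.range m, step i ^ 2) := by
        gcongr
        exact (pow_le_pow_left' hsum 2).trans hpower
    _ = m * ∑ i ∈ Finset.range m, 2 * step i ^ 2 := by rw [← Finset.mul_sum]; ring
    _ ≤ m * ∑ _i ∈ Finset.range m, ((k + 1 : ℝ≥0∞)⁻¹ * ∑ j, chiSqDiv (κ j a) (P j)) :=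
        mul_le_mul_right (Finset.sum_le_sum fun i _ => hstep i) _
    _ = _ := by rw [Finset.sum_const, Finset.card_range, nsmul_eq_mul]; ring

end Amplification

section SampleSplitting

variable {α β γ Y : Type*} [MeasurableSpace Y]

/-- Splitting a sample indexed by `γ` into two samples along a decomposition `α ⊕ β ≃ γ` of the
index set. -/
def splitEquiv (σ : α ⊕ β ≃ γ) : (γ → Y) ≃ᵐ (α → Y) × (β → Y) :=
  (MeasurableEquiv.piCongrLeft (fun _ => Y) σ).symm.trans
    (MeasurableEquiv.sumPiEquivProdPi fun _ => Y)

theorem measurePreserving_splitEquiv [Fintype α] [Fintype β] [Fintype γ] (σ : α ⊕ β ≃ γ)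
    (μ : Measure Y) [SigmaFinite μ] :
    MeasurePreserving (splitEquiv σ) (Measure.pi fun _ => μ)
      ((Measure.pi fun _ => μ).prod (Measure.pi fun _ => μ)) :=
  (measurePreserving_sumPiEquivProdPi fun _ => μ).comp
    ((measurePreserving_piCongrLeft (fun _ => μ) σ).symm)

variable {Θ : Type*} (P : Θ → Measure Y) [∀ θ, IsProbabilityMeasure (P θ)] (h k m : ℕ)

theorem ofReal_ampErr_le_iSup_etvDist (n : ℕ) (T : Kernel (Fin n → Y) (Fin (n + m) → Y))
    [hT : IsMarkovKernel T] :
    ENNReal.ofReal (ampErr P n m) ≤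
      ⨆ θ, etvDist (T ∘ₘ Measure.pi fun _ => P θ) (Measure.pi fun _ => P θ) := by
  have hfin : ⨆ θ, etvDist (T ∘ₘ Measure.pi fun _ => P θ) (Measure.pi fun _ => P θ) ≠ ⊤ :=
    ne_top_of_le_ne_top ENNReal.one_ne_top (iSup_le fun θ => etvDist_le_one)
  have hle : ampErr P n m ≤ ⨆ θ, tvDist (Measure.pi fun _ => P θ) (T ∘ₘ Measure.pi fun _ => P θ) :=
    ciInf_le ⟨0, by rintro _ ⟨T, rfl⟩; exact Real.iSup_nonneg fun θ => tvDist_nonneg _ _⟩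
      (⟨T, hT⟩ : {T : Kernel _ _ // IsMarkovKernel T})
  refine ENNReal.ofReal_le_of_le_toReal (hle.trans (Real.iSup_le (fun θ => ?_)
    ENNReal.toReal_nonneg))
  rw [← ENNReal.ofReal_le_iff_le_toReal hfin, tvDist_comm]
  exact ofReal_tvDist_le_etvDist.trans (le_iSup (fun θ =>
    etvDist (T ∘ₘ Measure.pi fun _ => P θ) (Measure.pi fun _ => P θ)) θ)

theorem ofReal_ampErr_add_le (C : Kernel ((Fin h → Y) × (Fin k → Y)) (Fin (k + m) → Y))
    [IsMarkovKernel C] :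
    ENNReal.ofReal (ampErr P (h + k) m) ≤ ⨆ θ, ∫⁻ a,
      etvDist (C ∘ₘ (Measure.dirac a).prod (Measure.pi fun _ => P θ)) (Measure.pi fun _ => P θ)
        ∂(Measure.pi fun _ : Fin h => P θ) := by
  let σ : Fin h ⊕ Fin k ≃ Fin (h + k) := finSumFinEquiv
  let τ : Fin h ⊕ Fin (k + m) ≃ Fin (h + k + m) :=
    finSumFinEquiv.trans (finCongr (add_assoc h k m).symm)
  let T : Kernel (Fin (h + k) → Y) (Fin (h + k + m) → Y) :=
    ((Kernel.deterministic Prod.fst measurable_fst ×ₖ C).comap (splitEquiv σ)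
      (splitEquiv σ).measurable).map (splitEquiv τ).symm
  have hT : IsMarkovKernel T := Kernel.IsMarkovKernel.map _ (MeasurableEquiv.measurable _)
  refine (ofReal_ampErr_le_iSup_etvDist P m (h + k) T).trans (iSup_mono fun θ => ?_)
  rw [← Measure.map_comp _ _ (MeasurableEquiv.measurable _), ← Kernel.comp_deterministic_eq_comap,
    ← Measure.comp_assoc, Measure.deterministic_comp_eq_map,
    (measurePreserving_splitEquiv σ (P θ)).map_eq,
    ← ((measurePreserving_splitEquiv τ (P θ)).symm).map_eq]
  exact (etvDist_map_le (MeasurableEquiv.measurable _)).trans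
    (etvDist_deterministic_fst_prod_comp_prod_le C _ _ _)

end SampleSplitting

section EstimatorRisk

theorem iInf_sum_apply {ι : Type*} [Fintype ι] {E : ι → Type*} [∀ j, Nonempty (E j)]
    (r : ∀ j, E j → ℝ≥0∞) : ⨅ e : ∀ j, E j, ∑ j, r j (e j) = ∑ j, ⨅ x, r j x := by
  rw [ENNReal.iInf_sum fun _ e e' => ⟨fun j => if r j (e j) ≤ r j (e' j) then e j else e' j,
    fun j _ => by dsimp only; split_ifs with hle <;> simp [hle, le_of_not_ge]⟩]
  exact Finset.sum_congr rfl fun j _ => (Function.surjective_eval j).iInf_comp (r j)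

variable {ι : Type*} [Fintype ι] {X : ι → Type*} [∀ j, MeasurableSpace (X j)]

theorem lintegral_pi_sum_chiSqDiv_le {α : Type*} [Fintype α] (P : ∀ j, Measure (X j))
    [∀ j, IsProbabilityMeasure (P j)] (est : ∀ j, Kernel (α → X j) (X j)) :
    ∫⁻ a, ∑ j, chiSqDiv (est j fun i => a i j) (P j) ∂(Measure.pi fun _ : α => Measure.pi P) ≤
      ∑ j, ∫⁻ x, chiSqDiv (est j x) (P j) ∂(Measure.pi fun _ : α => P j) := by
  calc ∫⁻ a, ∑ j, chiSqDiv (est j fun i => a i j) (P j) ∂(Measure.pi fun _ : α => Measure.pi P)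
      = ∫⁻ x, ∑ j, chiSqDiv (est j (x j)) (P j)
          ∂(Measure.pi fun j => Measure.pi fun _ : α => P j) := by
        rw [← map_swapEquiv_pi fun _ => P, lintegral_map_equiv]
        rfl
    _ ≤ ∑ j, ∫⁻ x, chiSqDiv (est j x) (P j) ∂(Measure.pi fun _ : α => P j) :=
        lintegral_pi_sum_le (fun j => Measure.pi fun _ : α => P j)
          fun j x => chiSqDiv (est j x) (P j)

variable {Θ : ι → Type*} (p : ∀ j, Θ j → Measure (X j)) [∀ j t, IsProbabilityMeasure (p j t)]
  (h k m : ℕ)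

theorem ofReal_ampErr_pi_sq_le (est : ∀ j, Kernel (Fin h → X j) (X j))
    [∀ j, IsMarkovKernel (est j)] :
    ENNReal.ofReal (ampErr (fun θ : ∀ j, Θ j => Measure.pi fun j => p j (θ j)) (h + k) m) ^ 2 ≤
      m ^ 2 / (2 * (k + 1)) * ∑ j, ⨆ t, ∫⁻ x, chiSqDiv (est j x) (p j t)
        ∂(Measure.pi fun _ => p j t) := by
  rw [← ENNReal.rpow_two, ← ENNReal.le_rpow_inv_iff two_pos]
  let κ (j : ι) : Kernel (Fin h → ∀ j, X j) (X j) :=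
    (est j).comap (fun a i => a i j) (by fun_prop)
  refine (ofReal_ampErr_add_le _ h k m (insertMany κ k m)).trans (iSup_le fun θ => ?_)
  rw [ENNReal.le_rpow_inv_iff two_pos, ENNReal.rpow_two]
  refine (sq_lintegral_le _ _).trans ((lintegral_mono fun a =>
    etvDist_insertMany_comp_sq_le κ k m (fun j => p j (θ j)) a).trans ?_)
  rw [lintegral_const_mul' _ _ (ENNReal.div_ne_top (by finiteness) (by simp))]
  gcongr
  refine (lintegral_pi_sum_chiSqDiv_le (fun j => p j (θ j)) est).trans ?_
  gcongr with j
  exact le_iSup (fun t => ∫⁻ x, chiSqDiv (est j x) (p j t) ∂(Measure.pi fun _ => p j t)) (θ j)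

end EstimatorRisk

theorem ampErr_of_isEmpty {X Θ : Type*} [MeasurableSpace X] [IsEmpty Θ] (P : Θ → Measure X)
    (n m : ℕ) : ampErr P n m = 0 := by
  simp [ampErr]

theorem ampErr_le_sqrt_sum_chiSqRisk_of_product_general
    {ι : Type*} [Fintype ι] {X : ι → Type*} [∀ j, MeasurableSpace (X j)]
    {Θ : ι → Type*} (p : ∀ j, Θ j → Measure (X j)) (hp : ∀ j t, IsProbabilityMeasure (p j t))
    (h k m : ℕ) :
    ENNReal.ofReal
        (ampErr (fun θ : (∀ j, Θ j) => Measure.pi fun j => p j (θ j)) (h + k) m) ≤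
      ((m : ℝ≥0∞) ^ 2 / (2 * (k + 1)) * ∑ j, chiSqRisk (p j) h) ^ ((1 : ℝ) / 2) := by
  rcases isEmpty_or_nonempty (∀ j, Θ j) with hΘ | ⟨⟨θ⟩⟩
  · simp [ampErr_of_isEmpty]
  have hest (j : ι) : Nonempty {est : Kernel (Fin h → X j) (X j) // IsMarkovKernel est} :=
    ⟨⟨Kernel.const _ (p j (θ j)), inferInstance⟩⟩
  have hc : (m : ℝ≥0∞) ^ 2 / (2 * (k + 1)) ≠ ⊤ := ENNReal.div_ne_top (by finiteness) (by simp)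
  rw [one_div, ENNReal.le_rpow_inv_iff two_pos, ENNReal.rpow_two]
  simp only [chiSqRisk]
  rw [← iInf_sum_apply, ENNReal.mul_iInf fun htop => absurd htop hc]
  refine le_iInf fun est => ?_
  have hmarkov (j : ι) : IsMarkovKernel (est j).1 := (est j).2
  exact ofReal_ampErr_pi_sq_le p h k m fun j => (est j).1

/-- Amplification via learning: product classes.
For a product class `𝒫 = ∏_{j=1}^d 𝒫_j` of distributions on `∏_j 𝒳_j`, any even
`n ≥ 2` and any `m ≥ 0`,
`ε*(𝒫, n, m) ≤ sqrt((m²/n) · Σ_{j=1}^d r_{χ²}(𝒫_j, n/2))`. -/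
theorem ampErr_le_sqrt_sum_chiSqRisk_of_product
    {d : ℕ} {X : Fin d → Type*} [∀ j, MeasurableSpace (X j)]
    {Θ : Fin d → Type*} (p : ∀ j, Θ j → Measure (X j))
    (hp : ∀ j t, IsProbabilityMeasure (p j t))
    (n m : ℕ) (hn : 2 ≤ n) (hev : Even n) :
    ENNReal.ofReal
        (ampErr (fun θ : (∀ j, Θ j) => Measure.pi fun j => p j (θ j)) n m) ≤
      ((m : ℝ≥0∞) ^ 2 / (n : ℝ≥0∞) * ∑ j : Fin d, chiSqRisk (p j) (n / 2)) ^
        ((1 : ℝ) / 2) := by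
  obtain ⟨h, rfl⟩ := hev
  have hhalf : (h + h) / 2 = h := by omega
  have hcast : ((h + h : ℕ) : ℝ≥0∞) ≤ 2 * (h + 1) := by exact_mod_cast by omega
  rw [hhalf]
  refine (ampErr_le_sqrt_sum_chiSqRisk_of_product_general p hp h h m).trans ?_
  gcongr
end

section
/- Fix constants 0 < α_lo < α_hi < 1 and β > 0. There exists a constant c = c(α_lo, α_hi, β) > 0 such that the following holds for every d, n ≥ 1, m ≥ 0 and every product model 𝒫 = { ∏_{j=1}^d p_{θ_j} : θ_j ∈ Θ_j } on ∏_{j=1}^d 𝒳_j: if for each j ∈ [d] there exist θ_{j,+}, θ_{j,−} ∈ Θ_j and a number α_j ∈ (α_lo, α_hi) such that ‖p_{θ_{j,+}}^{⊗n} − p_{θ_{j,−}}^{⊗n}‖_TV ≤ α_j − β/√d and ‖p_{θ_{j,+}}^{⊗(n+m)} − p_{θ_{j,−}}^{⊗(n+m)}‖_TV ≥ α_j + β/√d, then the minimax sample-amplification error satisfies ε*(𝒫,n,m) ≥ c. -/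
open MeasureTheory ProbabilityTheory
open scoped ENNReal NNReal

/-!
Fix two parameter values per coordinate and draw the sign pattern `θ` uniformly at random. Given the
data, the signs are independent with posterior means `h j`, and `𝔼 |h j|` is the total variation
distance between the two laws of coordinate `j`. The mean of `F` under independent signs is
nondecreasing in their means if `F` is monotone, and it is affine in each mean. Hence an estimator
`e` of `θ` achieves `𝔼 F (e * θ) ≤ signMean t F`, where `t` is the vector of total variation
distances, and coordinatewise maximum likelihood attains equality.

Applied to the output of an amplifier, maximum likelihood for `n + m` samples is an estimator based
on `n` samples only, so it scores at most `signMean t F`, whereas on `n + m` genuine samples it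
scores `signMean t' F`. Taking for `F` a soft threshold of the number of correct signs, whose
fluctuations are of order `√d`, these two values are separated by a constant.
-/

open scoped BigOperators

section SignMean

lemma expect_intUnits (f : ℤˣ → ℝ) : 𝔼 s, f s = (f 1 + f (-1)) / 2 := by
  rw [Fintype.expect_eq_sum_div_card, UnitsInt.univ, Finset.sum_pair (by decide)]
  simp

lemma expect_one_add_intUnits_mul (x : ℝ) : 𝔼 s : ℤˣ, (1 + s * x) = 1 := by
  rw [expect_intUnits]
  push_cast
  ring

lemma abs_intUnits_mul (s : ℤˣ) (x : ℝ) : |s * x| = |x| := by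
  rcases Int.units_eq_one_or s with rfl | rfl <;> simp

lemma one_add_intUnits_mul_nonneg {x : ℝ} (hx : |x| ≤ 1) (s : ℤˣ) : 0 ≤ 1 + s * x := by
  have := neg_abs_le (s * x)
  rw [abs_intUnits_mul] at this
  linarith

variable {ι : Type*} [Fintype ι]

/-- The density, with respect to the uniform distribution on `ι → ℤˣ`, of a vector of independent
random signs with means `t j`. -/
noncomputable def signDensity (t : ι → ℝ) (θ : ι → ℤˣ) : ℝ := ∏ j, (1 + θ j * t j)

lemma signDensity_nonneg {t : ι → ℝ} (ht : ∀ j, |t j| ≤ 1) (θ : ι → ℤˣ) : 0 ≤ signDensity t θ :=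
  Finset.prod_nonneg fun j _ => one_add_intUnits_mul_nonneg (ht j) (θ j)

lemma signDensity_mul_left (t : ι → ℝ) (e θ : ι → ℤˣ) :
    signDensity t (e * θ) = signDensity (fun j => e j * t j) θ :=
  Finset.prod_congr rfl fun j _ => by push_cast [Pi.mul_apply]; ring

lemma signDensity_mul_signDensity_le {t t' : ι → ℝ} (ht : ∀ j, |t j| ≤ 1)
    (ht' : ∀ j, |t' j| ≤ 1) (htt' : ∀ j, t j ≤ t' j) (θ η : ι → ℤˣ) :
    signDensity t θ * signDensity t' η ≤ signDensity t (θ ⊓ η) * signDensity t' (θ ⊔ η) := by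
  simp_rw [signDensity, ← Finset.prod_mul_distrib]
  refine Finset.prod_le_prod (fun j _ => mul_nonneg (one_add_intUnits_mul_nonneg (ht j) _)
    (one_add_intUnits_mul_nonneg (ht' j) _)) fun j _ => ?_
  have hle : (-1 : ℤˣ) ≤ 1 := by decide
  rcases Int.units_eq_one_or (θ j) with hθ | hθ <;>
    rcases Int.units_eq_one_or (η j) with hη | hη <;> simp [hθ, hη, hle]
  linarith [htt' j]

variable [DecidableEq ι]

/-- The expectation of `F θ` for independent random signs `θ j` with means `t j`. As a function of
`t` it is the multilinear extension of `F` from the vertices of the cube `[-1, 1]^ι`. -/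
noncomputable def signMean (t : ι → ℝ) (F : (ι → ℤˣ) → ℝ) : ℝ := 𝔼 θ, signDensity t θ * F θ

lemma expect_prod_eval (f : ι → ℤˣ → ℝ) :
    𝔼 θ : ι → ℤˣ, ∏ j, f j (θ j) = ∏ j, 𝔼 s, f j s := by
  simp_rw [Fintype.expect_eq_sum_div_card, Finset.prod_div_distrib, Finset.prod_univ_sum,
    Fintype.piFinset_univ]
  simp

lemma signMean_prod (t : ι → ℝ) (g : ι → ℤˣ → ℝ) :
    signMean t (fun θ => ∏ j, g j (θ j)) = ∏ j, 𝔼 s : ℤˣ, (1 + s * t j) * g j s := by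
  simp_rw [signMean, signDensity, ← Finset.prod_mul_distrib]
  exact expect_prod_eval fun j s => (1 + s * t j) * g j s

lemma expect_signDensity (t : ι → ℝ) : 𝔼 θ, signDensity t θ = 1 := by
  simp_rw [signDensity, expect_prod_eval fun j s => 1 + (s : ℝ) * t j, expect_one_add_intUnits_mul,
    Finset.prod_const_one]

lemma signMean_le_signMean {t : ι → ℝ} (ht : ∀ j, |t j| ≤ 1) {F G : (ι → ℤˣ) → ℝ}
    (hFG : ∀ θ, F θ ≤ G θ) : signMean t F ≤ signMean t G :=
  Finset.expect_le_expect fun θ _ => mul_le_mul_of_nonneg_left (hFG θ) (signDensity_nonneg ht θ)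

lemma signMean_one_sub (t : ι → ℝ) (F : (ι → ℤˣ) → ℝ) :
    signMean t (fun θ => 1 - F θ) = 1 - signMean t F := by
  simp [signMean, mul_sub, Finset.expect_sub_distrib, expect_signDensity]

lemma signMean_comp_mul_left (t : ι → ℝ) (e : ι → ℤˣ) (F : (ι → ℤˣ) → ℝ) :
    signMean t (fun θ => F (e * θ)) = signMean (fun j => e j * t j) F := by
  refine Fintype.expect_equiv (Equiv.mulLeft e) _ _ fun θ => ?_
  have he : e * (e * θ) = θ := by
    rw [← mul_assoc, show e * e = 1 from funext fun j => Int.units_mul_self _, one_mul]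
  simp only [Equiv.coe_mulLeft]
  rw [← signDensity_mul_left, he]

lemma signMean_mono {F : (ι → ℤˣ) → ℝ} (hF : Monotone F) (hF0 : 0 ≤ F) {t t' : ι → ℝ}
    (ht : ∀ j, |t j| ≤ 1) (ht' : ∀ j, |t' j| ≤ 1) (htt' : ∀ j, t j ≤ t' j) :
    signMean t F ≤ signMean t' F := by
  have hmass : ∑ θ, signDensity t θ = ∑ θ, signDensity t' θ := by
    simp_rw [← Fintype.card_smul_expect, expect_signDensity]
  have hholley := holley _ _ F hF0 (signDensity_nonneg ht) (signDensity_nonneg ht') hF hmass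
    (signDensity_mul_signDensity_le ht ht' htt')
  simp_rw [signMean, Fintype.expect_eq_sum_div_card, mul_comm _ (F _)]
  gcongr

lemma signMean_sub_eval (t : ι → ℝ) (i : ι) : signMean t (fun θ => θ i - t i) = 0 := by
  have h := signMean_prod t fun j s => if j = i then (s : ℝ) - t j else 1
  simp only [Finset.prod_ite_eq', Finset.mem_univ, if_true] at h
  rw [h, Finset.prod_eq_zero (Finset.mem_univ i)]
  rw [expect_intUnits]
  simp only [if_true, Units.val_one, Units.val_neg, Int.cast_neg, Int.cast_one]
  ring

lemma signMean_sub_eval_mul_sub_eval (t : ι → ℝ) (i k : ι) :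
    signMean t (fun θ => (θ i - t i) * (θ k - t k)) = if i = k then 1 - t i ^ 2 else 0 := by
  have h := signMean_prod t fun j s =>
    (if j = i then (s : ℝ) - t j else 1) * (if j = k then (s : ℝ) - t j else 1)
  simp only [Finset.prod_mul_distrib, Finset.prod_ite_eq', Finset.mem_univ, if_true] at h
  rw [h]
  split_ifs with hik
  · subst hik
    rw [Finset.prod_eq_single_of_mem i (Finset.mem_univ i) fun j _ hj => by
      simp_rw [hj, if_false, mul_one, expect_one_add_intUnits_mul], expect_intUnits]
    simp only [if_true, Units.val_one, Units.val_neg, Int.cast_neg, Int.cast_one]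
    ring
  · rw [Finset.prod_eq_zero (Finset.mem_univ i)]
    rw [expect_intUnits]
    simp only [if_true, hik, if_false, Units.val_one, Units.val_neg, Int.cast_neg, Int.cast_one]
    ring

lemma signMean_sum_sub (t : ι → ℝ) : signMean t (fun θ => ∑ j, (θ j - t j)) = 0 := by
  simp_rw [signMean, Finset.mul_sum, Finset.expect_sum_comm]
  exact Finset.sum_eq_zero fun i _ => signMean_sub_eval t i

lemma signMean_sum_sub_sq (t : ι → ℝ) :
    signMean t (fun θ => (∑ j, (θ j - t j)) ^ 2) = ∑ j, (1 - t j ^ 2) := by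
  simp_rw [signMean, sq (Finset.sum _ _), Finset.sum_mul_sum, Finset.mul_sum,
    Finset.expect_sum_comm]
  refine Finset.sum_congr rfl fun i _ => ?_
  have hcov := signMean_sub_eval_mul_sub_eval t i
  simp_rw [signMean] at hcov
  simp_rw [hcov, Finset.sum_ite_eq, Finset.mem_univ, if_true]

lemma signMean_quadratic (t : ι → ℝ) (a b c : ℝ) :
    signMean t (fun θ => a + b * ∑ j, (θ j - t j) + c * (∑ j, (θ j - t j)) ^ 2) =
      a + c * ∑ j, (1 - t j ^ 2) := by
  rw [← signMean_sum_sub_sq]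
  have hmean := signMean_sum_sub t
  simp only [signMean] at hmean ⊢
  simp_rw [mul_add, mul_left_comm (signDensity t _), Finset.expect_add_distrib,
    ← Finset.mul_expect, hmean, ← Finset.expect_mul, expect_signDensity]
  ring

end SignMean

section Ramp

/-- The truncation of the affine function `u ↦ 1 / 2 + u` to the unit interval. -/
noncomputable def ramp (u : ℝ) : ℝ := max 0 (min 1 (1 / 2 + u))

lemma ramp_nonneg (u : ℝ) : 0 ≤ ramp u := le_max_left _ _

lemma ramp_le_one (u : ℝ) : ramp u ≤ 1 := max_le zero_le_one (min_le_left _ _)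

lemma monotone_ramp : Monotone ramp := fun u v h => by unfold ramp; gcongr

lemma ramp_neg (u : ℝ) : ramp (-u) = 1 - ramp u := by
  unfold ramp
  grind

lemma ramp_le_quadratic (u : ℝ) : ramp u ≤ 1 / 2 + u + u ^ 2 / 2 :=
  max_le (by nlinarith [sq_nonneg (u + 1)]) (min_le_of_right_le (by nlinarith [sq_nonneg u]))

variable {ι : Type*} [Fintype ι] [DecidableEq ι]

lemma signMean_ramp_le {t : ι → ℝ} (κ : ℝ) {a v : ℝ} (ht : ∀ j, |t j| ≤ 1)
    (hv : κ * (∑ j, t j - a) ≤ -v) :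
    signMean t (fun θ => ramp (κ * (∑ j, (θ j : ℝ) - a))) ≤
      1 / 2 - v + (κ ^ 2 * Fintype.card ι + v ^ 2) / 2 := by
  have hsq : ∑ j, (1 - t j ^ 2) ≤ (Fintype.card ι : ℝ) :=
    (Finset.sum_le_card_nsmul _ _ (1 : ℝ) fun j _ => by linarith [sq_nonneg (t j)]).trans_eq
      (by simp)
  have hramp (θ : ι → ℤˣ) : ramp (κ * (∑ j, (θ j : ℝ) - a)) ≤
      (1 / 2 - v + v ^ 2 / 2) + (κ - κ * v) * ∑ j, (θ j - t j)
        + κ ^ 2 / 2 * (∑ j, (θ j - t j)) ^ 2 := by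
    have hle : κ * (∑ j, (θ j : ℝ) - a) ≤ κ * ∑ j, (θ j - t j) - v := by
      rw [Finset.sum_sub_distrib]
      linarith
    refine (monotone_ramp hle).trans ((ramp_le_quadratic _).trans_eq ?_)
    ring
  calc signMean t (fun θ => ramp (κ * (∑ j, (θ j : ℝ) - a)))
      ≤ 1 / 2 - v + v ^ 2 / 2 + κ ^ 2 / 2 * ∑ j, (1 - t j ^ 2) :=
        (signMean_le_signMean ht hramp).trans_eq (signMean_quadratic t _ _ _)
    _ ≤ 1 / 2 - v + v ^ 2 / 2 + κ ^ 2 / 2 * (Fintype.card ι : ℝ) := by gcongr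
    _ = _ := by ring

lemma le_signMean_ramp {t : ι → ℝ} (κ : ℝ) {a v : ℝ} (ht : ∀ j, |t j| ≤ 1)
    (hv : v ≤ κ * (∑ j, t j - a)) :
    1 / 2 + v - (κ ^ 2 * Fintype.card ι + v ^ 2) / 2 ≤
      signMean t (fun θ => ramp (κ * (∑ j, (θ j : ℝ) - a))) := by
  have h := signMean_ramp_le (-κ) (a := a) (v := v) ht (by linarith)
  simp_rw [neg_mul, ramp_neg, signMean_one_sub, neg_sq] at h
  linarith

lemma exists_monotone_le_signMean_sub [Nonempty ι] {t t' : ι → ℝ} {β : ℝ}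
    (ht : ∀ j, |t j| ≤ 1) (ht' : ∀ j, |t' j| ≤ 1) (hβ : 0 ≤ β)
    (hgap : 2 * β * √(Fintype.card ι) ≤ ∑ j, (t' j - t j)) :
    ∃ F : (ι → ℤˣ) → ℝ, Monotone F ∧ (∀ θ, F θ ∈ Set.Icc 0 1) ∧
      β ^ 2 / (1 + β ^ 2) ≤ signMean t' F - signMean t F := by
  have hcard : (0 : ℝ) < Fintype.card ι := by exact_mod_cast Fintype.card_pos
  obtain ⟨r, hr, hr2⟩ : ∃ r : ℝ, 0 < r ∧ r ^ 2 = Fintype.card ι :=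
    ⟨_, Real.sqrt_pos.2 hcard, Real.sq_sqrt hcard.le⟩
  rw [← hr2, Real.sqrt_sq hr.le, Finset.sum_sub_distrib] at hgap
  -- The slope `κ` maximises the resulting gap `2 * v - (κ ^ 2 * r ^ 2 + v ^ 2)`, `v = κ * β * r`.
  set κ := β / ((1 + β ^ 2) * r) with hκ
  set v := β ^ 2 / (1 + β ^ 2) with hv
  set a := (∑ j, t j + ∑ j, t' j) / 2 with ha
  have hκ0 : 0 ≤ κ := by positivity
  have hκv : κ * (β * r) = v := by rw [hκ, hv]; field_simp
  have hvar : κ ^ 2 * Fintype.card ι + v ^ 2 = v := by rw [hκ, hv, ← hr2]; field_simp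
  have hlow : κ * (∑ j, t j - a) ≤ -v := by
    rw [← hκv, ← mul_neg]
    exact mul_le_mul_of_nonneg_left (by linarith) hκ0
  have hhigh : v ≤ κ * (∑ j, t' j - a) := by
    rw [← hκv]
    exact mul_le_mul_of_nonneg_left (by linarith) hκ0
  refine ⟨fun θ => ramp (κ * (∑ j, (θ j : ℝ) - a)), fun θ η hθη => monotone_ramp ?_,
    fun θ => ⟨ramp_nonneg _, ramp_le_one _⟩, ?_⟩
  · gcongr
    exact_mod_cast hθη _
  · linarith [signMean_ramp_le κ ht hlow, le_signMean_ramp κ ht' hhigh]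

end Ramp

section TotalVariation

variable {Y : Type*} [MeasurableSpace Y]

lemma abs_measureReal_sub_le_one (μ ν : Measure Y) [IsProbabilityMeasure μ]
    [IsProbabilityMeasure ν] (A : Set Y) : |μ.real A - ν.real A| ≤ 1 :=
  abs_sub_le_of_nonneg_of_le measureReal_nonneg measureReal_le_one measureReal_nonneg
    measureReal_le_one

lemma abs_measureReal_sub_le_tvDist (μ ν : Measure Y) [IsProbabilityMeasure μ]
    [IsProbabilityMeasure ν] {A : Set Y} (hA : MeasurableSet A) :
    |μ.real A - ν.real A| ≤ tvDist μ ν :=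
  le_ciSup (f := fun A : {s : Set Y // MeasurableSet s} => |μ.real A - ν.real A|)
    ⟨1, Set.forall_mem_range.2 fun _ => abs_measureReal_sub_le_one μ ν _⟩ ⟨A, hA⟩

lemma tvDist_le {μ ν : Measure Y} {C : ℝ}
    (h : ∀ A, MeasurableSet A → |μ.real A - ν.real A| ≤ C) : tvDist μ ν ≤ C :=
  have : Nonempty {s : Set Y // MeasurableSet s} := ⟨⟨∅, .empty⟩⟩
  ciSup_le fun A => h A A.2

lemma tvDist_le_one (μ ν : Measure Y) [IsProbabilityMeasure μ] [IsProbabilityMeasure ν] :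
    tvDist μ ν ≤ 1 :=
  tvDist_le fun A _ => abs_measureReal_sub_le_one μ ν A

lemma abs_tvDist_le_one (μ ν : Measure Y) [IsProbabilityMeasure μ] [IsProbabilityMeasure ν] :
    |tvDist μ ν| ≤ 1 := by
  rw [tvDist, abs_of_nonneg (Real.iSup_nonneg fun _ => abs_nonneg _)]
  exact tvDist_le_one μ ν

lemma tvDist_map_le {Z : Type*} [MeasurableSpace Z] (μ ν : Measure Y) [IsProbabilityMeasure μ]
    [IsProbabilityMeasure ν] {f : Y → Z} (hf : Measurable f) :
    tvDist (μ.map f) (ν.map f) ≤ tvDist μ ν :=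
  tvDist_le fun A hA => by
    rw [map_measureReal_apply hf hA, map_measureReal_apply hf hA]
    exact abs_measureReal_sub_le_tvDist μ ν (hf hA)

end TotalVariation

section PosteriorMean

variable {Y : Type*} [MeasurableSpace Y]

/-- The law of an observation drawn from `R s` for a uniformly random sign `s`. -/
noncomputable def signMixture (R : ℤˣ → Measure Y) : Measure Y :=
  (2⁻¹ : ℝ≥0∞) • (R 1 + R (-1))

/-- The posterior mean of a uniformly random sign `s` given an observation drawn from `R s`. It is
truncated so that it takes values in `[-1, 1]` everywhere and not just almost everywhere. -/
noncomputable def posteriorMean (R : ℤˣ → Measure Y) (y : Y) : ℝ :=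
  max (-1) (min 1 (((R 1).rnDeriv (signMixture R) y).toReal - 1))

lemma measurable_posteriorMean (R : ℤˣ → Measure Y) : Measurable (posteriorMean R) := by
  unfold posteriorMean
  fun_prop

lemma abs_posteriorMean_le_one (R : ℤˣ → Measure Y) (y : Y) : |posteriorMean R y| ≤ 1 :=
  abs_le.2 ⟨le_max_left _ _, max_le (by norm_num) (min_le_left _ _)⟩

lemma add_eq_withDensity_signMixture (R : ℤˣ → Measure Y) :
    R 1 + R (-1) = (signMixture R).withDensity fun _ => 2 := by
  rw [withDensity_const, signMixture, smul_smul, ENNReal.mul_inv_cancel (by simp) (by simp),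
    one_smul]

lemma absolutelyContinuous_signMixture (R : ℤˣ → Measure Y) (s : ℤˣ) : R s ≪ signMixture R := by
  have hle : R s ≤ R 1 + R (-1) := by
    rcases Int.units_eq_one_or s with rfl | rfl
    exacts [Measure.le_add_right le_rfl, Measure.le_add_left le_rfl]
  rw [add_eq_withDensity_signMixture] at hle
  exact (Measure.absolutelyContinuous_of_le hle).trans (withDensity_absolutelyContinuous _ _)

variable (R : ℤˣ → Measure Y) [∀ s, IsProbabilityMeasure (R s)]

instance isProbabilityMeasure_signMixture : IsProbabilityMeasure (signMixture R) := ⟨by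
  simp [signMixture, ENNReal.inv_two_add_inv_two]⟩

lemma rnDeriv_add_rnDeriv_signMixture :
    (R 1).rnDeriv (signMixture R) + (R (-1)).rnDeriv (signMixture R)
      =ᵐ[signMixture R] fun _ => 2 := by
  rw [← withDensity_eq_iff_of_sigmaFinite (by fun_prop) (by fun_prop),
    withDensity_add_left (by fun_prop),
    Measure.withDensity_rnDeriv_eq _ _ (absolutelyContinuous_signMixture R _),
    Measure.withDensity_rnDeriv_eq _ _ (absolutelyContinuous_signMixture R _),
    add_eq_withDensity_signMixture]

lemma rnDeriv_signMixture (s : ℤˣ) :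
    (R s).rnDeriv (signMixture R) =ᵐ[signMixture R]
      fun y => ENNReal.ofReal (1 + s * posteriorMean R y) := by
  filter_upwards [rnDeriv_add_rnDeriv_signMixture R] with y hy
  rw [Pi.add_apply] at hy
  lift (R 1).rnDeriv (signMixture R) y to ℝ≥0 using fun h => by simp [h] at hy with a ha
  lift (R (-1)).rnDeriv (signMixture R) y to ℝ≥0 using fun h => by simp [h] at hy with b hb
  have hab : (a : ℝ) + b = 2 := by exact_mod_cast hy
  have hpost : posteriorMean R y = a - 1 := by
    rw [posteriorMean, ← ha, ENNReal.coe_toReal, min_eq_right (by linarith [b.2]),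
      max_eq_right (by linarith [a.2])]
  rcases Int.units_eq_one_or s with rfl | rfl
  · simp [hpost, ← ha]
  · rw [hpost, ← hb, ← ENNReal.ofReal_coe_nnreal]
    congr 1
    simp only [Units.val_neg, Units.val_one, Int.cast_neg, Int.cast_one]
    linarith

lemma withDensity_signMixture (s : ℤˣ) :
    (signMixture R).withDensity (fun y => ENNReal.ofReal (1 + s * posteriorMean R y)) = R s := by
  rw [← withDensity_congr_ae (rnDeriv_signMixture R s),
    Measure.withDensity_rnDeriv_eq _ _ (absolutelyContinuous_signMixture R s)]

lemma integral_eq_integral_signMixture (s : ℤˣ) (f : Y → ℝ) :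
    ∫ y, f y ∂(R s) = ∫ y, (1 + s * posteriorMean R y) * f y ∂signMixture R := by
  have hm := measurable_posteriorMean R
  conv_lhs => rw [← withDensity_signMixture R s]
  rw [integral_withDensity_eq_integral_toReal_smul (by fun_prop) (by simp)]
  simp_rw [ENNReal.toReal_ofReal (one_add_intUnits_mul_nonneg (abs_posteriorMean_le_one R _) s),
    smul_eq_mul]

lemma integrable_posteriorMean : Integrable (posteriorMean R) (signMixture R) :=
  .of_bound (measurable_posteriorMean R).aestronglyMeasurable 1
    (.of_forall (abs_posteriorMean_le_one R))

lemma integral_posteriorMean : ∫ y, posteriorMean R y ∂signMixture R = 0 := by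
  have h := integral_eq_integral_signMixture R 1 fun _ => 1
  simp only [mul_one, Units.val_one, Int.cast_one, one_mul] at h
  rw [integral_add (integrable_const _) (integrable_posteriorMean R)] at h
  simpa using h

lemma integral_sub_integral_eq_integral_posteriorMean {f : Y → ℝ}
    (hf : Integrable f (signMixture R)) :
    ∫ y, f y ∂(R 1) - ∫ y, f y ∂(R (-1)) =
      ∫ y, posteriorMean R y * (2 * f y - 1) ∂signMixture R := by
  have hhf : Integrable (fun y => posteriorMean R y * f y) (signMixture R) :=
    hf.bdd_mul (measurable_posteriorMean R).aestronglyMeasurable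
      (.of_forall (abs_posteriorMean_le_one R))
  simp_rw [integral_eq_integral_signMixture R, mul_sub, mul_one, mul_left_comm _ (2 : ℝ)]
  rw [integral_sub (hhf.const_mul 2) (integrable_posteriorMean R), integral_posteriorMean,
    integral_const_mul]
  simp only [Units.val_neg, Units.val_one, Int.cast_neg, Int.cast_one, one_mul, add_mul,
    neg_mul, ← sub_eq_add_neg, sub_mul]
  rw [integral_add hf hhf, integral_sub hf hhf]
  ring

lemma abs_integral_sub_integral_le {f : Y → ℝ} (hf : Measurable f)
    (hf01 : ∀ y, f y ∈ Set.Icc 0 1) :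
    |∫ y, f y ∂(R 1) - ∫ y, f y ∂(R (-1))| ≤ ∫ y, |posteriorMean R y| ∂signMixture R := by
  rw [integral_sub_integral_eq_integral_posteriorMean R
    (.of_mem_Icc 0 1 hf.aemeasurable (.of_forall hf01))]
  refine abs_integral_le_integral_abs.trans (integral_mono_of_nonneg
    (.of_forall fun _ => abs_nonneg _) (integrable_posteriorMean R).abs (.of_forall fun y => ?_))
  have h01 : |2 * f y - 1| ≤ 1 := abs_le.2 ⟨by linarith [(hf01 y).1], by linarith [(hf01 y).2]⟩
  simpa only [abs_mul, mul_one] using mul_le_mul_of_nonneg_left h01 (abs_nonneg (posteriorMean R y))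

lemma tvDist_eq_integral_abs_posteriorMean :
    tvDist (R 1) (R (-1)) = ∫ y, |posteriorMean R y| ∂signMixture R := by
  refine le_antisymm (tvDist_le fun A hA => ?_) ?_
  · simpa only [integral_indicator_one hA] using
      abs_integral_sub_integral_le R (measurable_one.indicator hA) fun y => by
        by_cases hy : y ∈ A <;> simp [hy]
  · have hA : MeasurableSet {y | 0 ≤ posteriorMean R y} :=
      measurableSet_le measurable_const (measurable_posteriorMean R)
    refine le_trans (le_of_eq ?_)
      ((le_abs_self _).trans (abs_measureReal_sub_le_tvDist (R 1) (R (-1)) hA))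
    rw [← integral_indicator_one hA, ← integral_indicator_one hA,
      integral_sub_integral_eq_integral_posteriorMean R
        ((integrable_const 1).indicator hA : Integrable (Set.indicator _ 1) _)]
    refine integral_congr_ae (.of_forall fun y => ?_)
    by_cases hy : 0 ≤ posteriorMean R y
    · norm_num [hy, abs_of_nonneg]
    · simp [hy, abs_of_neg (not_le.1 hy)]

lemma integral_sub_integral_le_tvDist (μ ν : Measure Y) [IsProbabilityMeasure μ]
    [IsProbabilityMeasure ν] {f : Y → ℝ} (hf : Measurable f) (hf01 : ∀ y, f y ∈ Set.Icc 0 1) :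
    ∫ y, f y ∂μ - ∫ y, f y ∂ν ≤ tvDist μ ν := by
  let R : ℤˣ → Measure Y := fun s => if s = 1 then μ else ν
  have hR (s : ℤˣ) : IsProbabilityMeasure (R s) := by
    dsimp only [R]
    split_ifs <;> infer_instance
  have h := abs_integral_sub_integral_le R hf hf01
  rw [← tvDist_eq_integral_abs_posteriorMean R] at h
  exact (le_abs_self _).trans h

end PosteriorMean

section SignMeasurable

instance {G : Type*} [Monoid G] [MeasurableSpace G] [MeasurableSingletonClass G] :
    MeasurableSingletonClass Gˣ :=
  ⟨fun u => ⟨{(u : G)}, .singleton _, by ext; simp [Units.ext_iff]⟩⟩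

/-- The sign of a real number as a unit of `ℤ`, with the convention that zero has sign `1`. -/
noncomputable def unitSign (x : ℝ) : ℤˣ := if 0 ≤ x then 1 else -1

lemma measurable_unitSign : Measurable unitSign :=
  .ite measurableSet_Ici measurable_const measurable_const

lemma unitSign_mul_self (x : ℝ) : unitSign x * x = |x| := by
  unfold unitSign
  split_ifs with hx
  · simp [abs_of_nonneg hx]
  · simp [abs_of_neg (not_le.1 hx)]

end SignMeasurable

section Integral

lemma integral_bind {X Z : Type*} [MeasurableSpace X] [MeasurableSpace Z] {μ : Measure X}
    {K : Kernel X Z} {f : Z → ℝ} (hf : Integrable f (μ.bind K)) :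
    ∫ w, f w ∂(μ.bind K) = ∫ x, ∫ w, f w ∂(K x) ∂μ := by
  rw [Measure.comp_eq_comp_const_apply] at hf ⊢
  rw [Kernel.integral_comp hf, Kernel.const_apply]

lemma integrable_expect {α ι : Type*} [MeasurableSpace α] [Fintype ι] {μ : Measure α}
    {f : ι → α → ℝ} (hf : ∀ i, Integrable (f i) μ) : Integrable (fun x => 𝔼 i, f i x) μ := by
  simp_rw [Fintype.expect_eq_sum_div_card]
  exact (integrable_finsetSum _ fun i _ => hf i).div_const _

lemma integral_expect {α ι : Type*} [MeasurableSpace α] [Fintype ι] {μ : Measure α}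
    {f : ι → α → ℝ} (hf : ∀ i, Integrable (f i) μ) :
    ∫ x, 𝔼 i, f i x ∂μ = 𝔼 i, ∫ x, f i x ∂μ := by
  simp_rw [Fintype.expect_eq_sum_div_card]
  rw [integral_div, integral_finsetSum _ fun i _ => hf i]

variable {ι : Type*} [Fintype ι] {Y : ι → Type*} [∀ j, MeasurableSpace (Y j)]

lemma pi_withDensity_ofReal (ν : ∀ j, Measure (Y j)) [∀ j, SigmaFinite (ν j)]
    {g : ∀ j, Y j → ℝ} (hg : ∀ j, Integrable (g j) (ν j)) (h0 : ∀ j y, 0 ≤ g j y) :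
    (Measure.pi fun j => (ν j).withDensity fun y => ENNReal.ofReal (g j y)) =
      (Measure.pi ν).withDensity fun z => ENNReal.ofReal (∏ j, g j (z j)) := by
  have : ∀ j, IsFiniteMeasure ((ν j).withDensity fun y => ENNReal.ofReal (g j y)) :=
    fun j => isFiniteMeasure_withDensity_ofReal (hg j).2
  refine Measure.pi_eq fun s hs => ?_
  have hgs (j) : Integrable (g j) ((ν j).restrict (s j)) := (hg j).restrict
  rw [withDensity_apply _ (MeasurableSet.univ_pi hs), Measure.restrict_pi_pi,
    ← ofReal_integral_eq_lintegral_ofReal (.fintype_prod_dep hgs)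
      (.of_forall fun z => Finset.prod_nonneg fun j _ => h0 j (z j)),
    integral_fintype_prod_eq_prod, ENNReal.ofReal_prod_of_nonneg fun j _ => integral_nonneg (h0 j)]
  refine Finset.prod_congr rfl fun j _ => ?_
  rw [withDensity_apply _ (hs j), ofReal_integral_eq_lintegral_ofReal (hgs j) (.of_forall (h0 j))]

lemma integrable_signDensity {ν : ∀ j, Measure (Y j)} [∀ j, IsFiniteMeasure (ν j)]
    {g : ∀ j, Y j → ℝ} (hg : ∀ j, Integrable (g j) (ν j)) (θ : ι → ℤˣ) :
    Integrable (fun z => signDensity (fun j => g j (z j)) θ) (Measure.pi ν) :=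
  Integrable.fintype_prod_dep (f := fun j y => 1 + (θ j : ℝ) * g j y) fun j =>
    (integrable_const 1).add ((hg j).const_mul _)

lemma integral_signDensity (ν : ∀ j, Measure (Y j)) [∀ j, IsProbabilityMeasure (ν j)]
    {g : ∀ j, Y j → ℝ} (hg : ∀ j, Integrable (g j) (ν j)) (θ : ι → ℤˣ) :
    ∫ z, signDensity (fun j => g j (z j)) θ ∂Measure.pi ν =
      signDensity (fun j => ∫ y, g j y ∂ν j) θ := by
  unfold signDensity
  rw [integral_fintype_prod_eq_prod (f := fun j y => 1 + (θ j : ℝ) * g j y)]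
  congr! with j
  rw [integral_add (integrable_const _) ((hg j).const_mul _), integral_const_mul]
  simp

lemma integrable_signMean [DecidableEq ι] {ν : ∀ j, Measure (Y j)} [∀ j, IsFiniteMeasure (ν j)]
    {g : ∀ j, Y j → ℝ} (hg : ∀ j, Integrable (g j) (ν j)) {ψ : (ι → ℤˣ) → (∀ j, Y j) → ℝ} {C : ℝ}
    (hψ : ∀ θ, Measurable (ψ θ)) (hC : ∀ θ z, |ψ θ z| ≤ C) :
    Integrable (fun z => signMean (fun j => g j (z j)) (ψ · z)) (Measure.pi ν) :=
  integrable_expect fun θ =>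
    (integrable_signDensity hg θ).mul_bdd (hψ θ).aestronglyMeasurable (.of_forall (hC θ))

lemma integral_signMean [DecidableEq ι] (ν : ∀ j, Measure (Y j)) [∀ j, IsProbabilityMeasure (ν j)]
    {g : ∀ j, Y j → ℝ} (hg : ∀ j, Integrable (g j) (ν j)) (F : (ι → ℤˣ) → ℝ) :
    ∫ z, signMean (fun j => g j (z j)) F ∂Measure.pi ν = signMean (fun j => ∫ y, g j y ∂ν j) F := by
  unfold signMean
  rw [integral_expect fun θ => (integrable_signDensity hg θ).mul_const _]
  simp_rw [integral_mul_const, integral_signDensity ν hg]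

variable (R : ∀ j, ℤˣ → Measure (Y j)) [∀ j s, IsProbabilityMeasure (R j s)]

lemma pi_eq_withDensity_signDensity (θ : ι → ℤˣ) :
    Measure.pi (fun j => R j (θ j)) = (Measure.pi fun j => signMixture (R j)).withDensity
      fun z => ENNReal.ofReal (signDensity (fun j => posteriorMean (R j) (z j)) θ) := by
  conv_lhs => enter [1, j]; rw [← withDensity_signMixture (R j) (θ j)]
  exact pi_withDensity_ofReal _ (fun j => (integrable_const _).add
    ((integrable_posteriorMean (R j)).const_mul _))
    fun j y => one_add_intUnits_mul_nonneg (abs_posteriorMean_le_one _ y) _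

lemma expect_integral_pi [DecidableEq ι] {ψ : (ι → ℤˣ) → (∀ j, Y j) → ℝ} {C : ℝ}
    (hψ : ∀ θ, Measurable (ψ θ)) (hC : ∀ θ z, |ψ θ z| ≤ C) :
    𝔼 θ, ∫ z, ψ θ z ∂Measure.pi (fun j => R j (θ j)) =
      ∫ z, signMean (fun j => posteriorMean (R j) (z j)) (ψ · z)
        ∂Measure.pi fun j => signMixture (R j) := by
  simp_rw [signMean]
  rw [integral_expect fun θ =>
    (integrable_signDensity (fun j => integrable_posteriorMean (R j)) θ).mul_bdd
      (hψ θ).aestronglyMeasurable (.of_forall (hC θ))]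
  refine Finset.expect_congr rfl fun θ _ => ?_
  have hm (j) := measurable_posteriorMean (R j)
  rw [pi_eq_withDensity_signDensity, integral_withDensity_eq_integral_toReal_smul
    (by unfold signDensity; fun_prop) (by simp)]
  simp_rw [ENNReal.toReal_ofReal (signDensity_nonneg (fun _ => abs_posteriorMean_le_one _ _) θ),
    smul_eq_mul]

lemma integral_signMean_abs_posteriorMean [DecidableEq ι] (F : (ι → ℤˣ) → ℝ) :
    ∫ z, signMean (fun j => |posteriorMean (R j) (z j)|) F ∂Measure.pi (fun j => signMixture (R j))
      = signMean (fun j => tvDist (R j 1) (R j (-1))) F := by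
  simp_rw [tvDist_eq_integral_abs_posteriorMean]
  exact integral_signMean _ (fun j => (integrable_posteriorMean (R j)).abs) F

end Integral

section SignDecoding

lemma abs_le_one_of_mem_Icc {x : ℝ} (hx : x ∈ Set.Icc 0 1) : |x| ≤ 1 :=
  (abs_of_nonneg hx.1).trans_le hx.2

lemma measurable_comp_mul_const {ι Z : Type*} [Finite ι] [MeasurableSpace Z] {e : Z → ι → ℤˣ}
    (he : Measurable e) (F : (ι → ℤˣ) → ℝ) (θ : ι → ℤˣ) : Measurable fun z => F (e z * θ) :=
  (Measurable.of_discrete (f := fun η => F (η * θ))).comp he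

variable {ι : Type*} {Y : ι → Type*} [∀ j, MeasurableSpace (Y j)]

/-- The maximum likelihood estimate of the signs `θ` from an observation drawn from
`Measure.pi fun j => R j (θ j)`. -/
noncomputable def decodeSigns (R : ∀ j, ℤˣ → Measure (Y j)) (z : ∀ j, Y j) (j : ι) : ℤˣ :=
  unitSign (posteriorMean (R j) (z j))

lemma measurable_decodeSigns (R : ∀ j, ℤˣ → Measure (Y j)) : Measurable (decodeSigns R) :=
  measurable_pi_lambda _ fun j =>
    measurable_unitSign.comp ((measurable_posteriorMean (R j)).comp (measurable_pi_apply j))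

variable [Fintype ι] [DecidableEq ι] (R : ∀ j, ℤˣ → Measure (Y j))
  [∀ j s, IsProbabilityMeasure (R j s)]

lemma expect_integral_decodeSigns (F : (ι → ℤˣ) → ℝ) :
    𝔼 θ, ∫ z, F (decodeSigns R z * θ) ∂Measure.pi (fun j => R j (θ j)) =
      signMean (fun j => tvDist (R j 1) (R j (-1))) F := by
  obtain ⟨C, hC⟩ := (Set.finite_range fun θ => |F θ|).bddAbove
  rw [expect_integral_pi R (ψ := fun θ z => F (decodeSigns R z * θ))
    (measurable_comp_mul_const (measurable_decodeSigns R) F) fun θ z => hC ⟨_, rfl⟩]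
  simp_rw [signMean_comp_mul_left, decodeSigns, unitSign_mul_self,
    integral_signMean_abs_posteriorMean]

variable {Z : Type*} [MeasurableSpace Z]

lemma integral_signMean_comp_mul_left_le {ν : Measure Z} [IsProbabilityMeasure ν] {t : ι → ℝ}
    (ht : ∀ j, |t j| ≤ 1) {e : Z → ι → ℤˣ} (he : Measurable e) {F : (ι → ℤˣ) → ℝ}
    (hF : Monotone F) (hF01 : ∀ θ, F θ ∈ Set.Icc 0 1) :
    signMean t (fun θ => ∫ w, F (e w * θ) ∂ν) ≤ signMean (fun j => |t j|) F := by
  have hint (θ : ι → ℤˣ) : Integrable (fun w => F (e w * θ)) ν :=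
    .of_mem_Icc 0 1 (measurable_comp_mul_const he F θ).aemeasurable
      (.of_forall fun w => hF01 _)
  calc signMean t (fun θ => ∫ w, F (e w * θ) ∂ν)
      = ∫ w, signMean t (fun θ => F (e w * θ)) ∂ν := by
        simp_rw [signMean]
        rw [integral_expect fun θ => (hint θ).const_mul _]
        simp_rw [integral_const_mul]
    _ ≤ ∫ _, signMean (fun j => |t j|) F ∂ν := by
        refine integral_mono (integrable_expect fun θ => (hint θ).const_mul _)
          (integrable_const _) fun w => ?_
        simp only [signMean_comp_mul_left]
        exact signMean_mono hF (fun θ => (hF01 θ).1)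
          (fun j => (abs_intUnits_mul _ _).trans_le (ht j))
          (fun j => (abs_abs _).trans_le (ht j))
          fun j => (le_abs_self _).trans_eq (abs_intUnits_mul _ _)
    _ = signMean (fun j => |t j|) F := by simp

lemma expect_integral_bind_le (K : Kernel (∀ j, Y j) Z) [IsMarkovKernel K] {e : Z → ι → ℤˣ}
    (he : Measurable e) {F : (ι → ℤˣ) → ℝ} (hF : Monotone F) (hF01 : ∀ θ, F θ ∈ Set.Icc 0 1) :
    𝔼 θ, ∫ w, F (e w * θ) ∂((Measure.pi fun j => R j (θ j)).bind K) ≤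
      signMean (fun j => tvDist (R j 1) (R j (-1))) F := by
  have hint (θ : ι → ℤˣ) (ν : Measure Z) [IsProbabilityMeasure ν] :
      Integrable (fun w => F (e w * θ)) ν :=
    .of_mem_Icc 0 1 (measurable_comp_mul_const he F θ).aemeasurable (.of_forall fun w => hF01 _)
  have hmeas (θ : ι → ℤˣ) : Measurable fun z => ∫ w, F (e w * θ) ∂K z :=
    (measurable_comp_mul_const he F θ).stronglyMeasurable.integral_kernel.measurable
  have habs (θ : ι → ℤˣ) (z : ∀ j, Y j) : |∫ w, F (e w * θ) ∂K z| ≤ 1 :=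
    abs_le_one_of_mem_Icc ((convex_Icc 0 1).integral_mem isClosed_Icc
      (.of_forall fun w => hF01 _) (hint θ (K z)))
  simp_rw [integral_bind (hint _ (Measure.bind _ K))]
  rw [expect_integral_pi R hmeas habs, ← integral_signMean_abs_posteriorMean]
  refine integral_mono (integrable_signMean (fun j => integrable_posteriorMean (R j)) hmeas habs)
    (integrable_signMean (fun j => (integrable_posteriorMean (R j)).abs) (fun _ => measurable_const)
      fun θ _ => abs_le_one_of_mem_Icc (hF01 θ)) fun z => ?_
  exact integral_signMean_comp_mul_left_le (fun j => abs_posteriorMean_le_one _ _) he hF hF01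

end SignDecoding

section Swap

lemma measurable_functionSwap {ι κ : Type*} {X : ι → κ → Type*}
    [∀ i j, MeasurableSpace (X i j)] :
    Measurable (Function.swap : (∀ i j, X i j) → ∀ j i, X i j) := by
  unfold Function.swap
  fun_prop

lemma pi_pi_map_swap {ι κ : Type*} [Fintype ι] [Fintype κ] {X : ι → κ → Type*}
    [∀ i j, MeasurableSpace (X i j)] (μ : ∀ i j, Measure (X i j))
    [∀ i j, SigmaFinite (μ i j)] :
    (Measure.pi fun i => Measure.pi fun j => μ i j).map Function.swap =
      Measure.pi fun j => Measure.pi fun i => μ i j := by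
  refine (Measure.pi_eq_generateFrom (fun _ => generateFrom_pi) (fun _ => isPiSystem_pi)
    (fun j => Measure.FiniteSpanningSetsIn.pi fun i => (μ i j).toFiniteSpanningSetsIn) ?_).symm
  intro s hs
  choose t ht hts using hs
  obtain rfl : (fun j => Set.univ.pi (t j)) = s := funext hts
  have hpre : Function.swap ⁻¹' (Set.univ.pi fun j => Set.univ.pi (t j)) =
      Set.univ.pi fun i => Set.univ.pi fun j => t j i := by
    ext z
    simpa [Function.swap] using forall_comm
  rw [Measure.map_apply measurable_functionSwap
    (.univ_pi fun j => .univ_pi fun i => ht j i trivial), hpre]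
  simp_rw [Measure.pi_pi]
  exact Finset.prod_comm

lemma bind_map_eq_bind_comap {α β γ : Type*} [MeasurableSpace α] [MeasurableSpace β]
    [MeasurableSpace γ] (μ : Measure α) (K : Kernel β γ) {f : α → β} (hf : Measurable f) :
    (μ.map f).bind K = μ.bind (K.comap f hf) := by
  rw [← Measure.deterministic_comp_eq_map hf, Measure.comp_assoc,
    Kernel.comp_deterministic_eq_comap]

end Swap

section Comparison

variable {ι : Type*} [Fintype ι]

theorem exists_le_tvDist_pi_bind [Nonempty ι] {Y Y' : ι → Type*} [∀ j, MeasurableSpace (Y j)]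
    [∀ j, MeasurableSpace (Y' j)] (R : ∀ j, ℤˣ → Measure (Y j)) (R' : ∀ j, ℤˣ → Measure (Y' j))
    [∀ j s, IsProbabilityMeasure (R j s)] [∀ j s, IsProbabilityMeasure (R' j s)]
    (K : Kernel (∀ j, Y j) (∀ j, Y' j)) [IsMarkovKernel K] {β : ℝ} (hβ : 0 ≤ β)
    (hgap : 2 * β * √(Fintype.card ι) ≤
      ∑ j, (tvDist (R' j 1) (R' j (-1)) - tvDist (R j 1) (R j (-1)))) :
    ∃ θ : ι → ℤˣ, β ^ 2 / (1 + β ^ 2) ≤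
      tvDist (Measure.pi fun j => R' j (θ j)) ((Measure.pi fun j => R j (θ j)).bind K) := by
  classical
  obtain ⟨F, hF, hF01, hgapF⟩ := exists_monotone_le_signMean_sub
    (fun j => abs_tvDist_le_one _ _) (fun j => abs_tvDist_le_one _ _) hβ hgap
  have hup := expect_integral_bind_le R K (measurable_decodeSigns R') hF hF01
  rw [← expect_integral_decodeSigns R' F] at hgapF
  obtain ⟨θ, -, hθ⟩ := Finset.exists_le_of_le_expect Finset.univ_nonempty
    ((hgapF.trans (sub_le_sub_left hup _)).trans_eq (Finset.expect_sub_distrib _ _ _).symm)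
  exact ⟨θ, hθ.trans (integral_sub_integral_le_tvDist _ _
    (measurable_comp_mul_const (measurable_decodeSigns R') F θ) fun _ => hF01 _)⟩

theorem exists_le_tvDist_pi_pi_bind [Nonempty ι] {n n' : Type*} [Fintype n] [Fintype n']
    {X : ι → Type*} [∀ j, MeasurableSpace (X j)] (q : ∀ j, ℤˣ → Measure (X j))
    [∀ j s, IsProbabilityMeasure (q j s)] (T : Kernel (n → ∀ j, X j) (n' → ∀ j, X j))
    [IsMarkovKernel T] {β : ℝ} (hβ : 0 ≤ β)
    (hgap : 2 * β * √(Fintype.card ι) ≤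
      ∑ j, (tvDist (Measure.pi fun _ : n' => q j 1) (Measure.pi fun _ : n' => q j (-1)) -
        tvDist (Measure.pi fun _ : n => q j 1) (Measure.pi fun _ : n => q j (-1)))) :
    ∃ θ : ι → ℤˣ, β ^ 2 / (1 + β ^ 2) ≤
      tvDist (Measure.pi fun _ : n' => Measure.pi fun j => q j (θ j))
        ((Measure.pi fun _ : n => Measure.pi fun j => q j (θ j)).bind T) := by
  have : IsMarkovKernel (T.comap (Function.swap : (∀ j, n → X j) → _) measurable_functionSwap) :=
    Kernel.IsMarkovKernel.comap T measurable_functionSwap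
  have : IsMarkovKernel ((T.comap Function.swap measurable_functionSwap).map
      (Function.swap : (n' → ∀ j, X j) → _)) :=
    Kernel.IsMarkovKernel.map _ measurable_functionSwap
  obtain ⟨θ, hθ⟩ := exists_le_tvDist_pi_bind (fun j s => Measure.pi fun _ : n => q j s)
    (fun j s => Measure.pi fun _ : n' => q j s)
    ((T.comap Function.swap measurable_functionSwap).map Function.swap) hβ hgap
  refine ⟨θ, hθ.trans ?_⟩
  rw [← Measure.map_comp _ _ measurable_functionSwap, ← bind_map_eq_bind_comap, pi_pi_map_swap,
    ← pi_pi_map_swap fun _ : n' => fun j => q j (θ j)]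
  exact tvDist_map_le _ _ measurable_functionSwap

theorem product_model_amplification_lower_bound_general [Nonempty ι] {X Θ : ι → Type*}
    [∀ j, MeasurableSpace (X j)] (p : ∀ j, Θ j → Measure (X j))
    [∀ j t, IsProbabilityMeasure (p j t)] (θp θm : ∀ j, Θ j) (n m : ℕ) {β : ℝ} (hβ : 0 ≤ β)
    (hgap : 2 * β * √(Fintype.card ι) ≤
      ∑ j, (tvDist (Measure.pi fun _ : Fin (n + m) => p j (θp j))
          (Measure.pi fun _ : Fin (n + m) => p j (θm j)) -
        tvDist (Measure.pi fun _ : Fin n => p j (θp j))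
          (Measure.pi fun _ : Fin n => p j (θm j)))) :
    β ^ 2 / (1 + β ^ 2) ≤ ampErr (fun θ : ∀ j, Θ j => Measure.pi fun j => p j (θ j)) n m := by
  have : ∀ j, Nonempty (X j) := fun j => (p j (θp j)).nonempty_of_neZero
  have : Nonempty {T : Kernel (Fin n → ∀ j, X j) (Fin (n + m) → ∀ j, X j) // IsMarkovKernel T} :=
    ⟨⟨Kernel.const _ (.dirac (Classical.arbitrary _)), inferInstance⟩⟩
  refine le_ciInf fun ⟨T, _⟩ => ?_
  let vertex (s : ℤˣ) (j : ι) : Θ j := if s = 1 then θp j else θm j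
  obtain ⟨θ, hθ⟩ := exists_le_tvDist_pi_pi_bind (fun j s => p j (vertex s j)) T hβ
    (by simpa [vertex] using hgap)
  exact hθ.trans (le_ciSup (f := fun θ : ∀ j, Θ j =>
    tvDist (Measure.pi fun _ : Fin (n + m) => Measure.pi fun j => p j (θ j))
      ((Measure.pi fun _ : Fin n => Measure.pi fun j => p j (θ j)).bind T))
    ⟨1, Set.forall_mem_range.2 fun _ => tvDist_le_one _ _⟩ fun j => vertex (θ j) j)

end Comparison

/-- Lower bound criterion for product models.
Fix `0 < α_lo < α_hi < 1` and `β > 0`. There is a constant `c > 0`, depending only on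
`(α_lo, α_hi, β)`, such that for every product model: if in each coordinate `j` there
are two parameters whose `n`-fold products are at TV distance at most `α_j − β/√d`
while their `(n+m)`-fold products are at TV distance at least `α_j + β/√d`, for some
`α_j ∈ (α_lo, α_hi)`, then `ε*(𝒫, n, m) ≥ c`. -/
theorem product_model_amplification_lower_bound
    (αlo αhi β : ℝ) (h0 : 0 < αlo) (h1 : αlo < αhi) (h2 : αhi < 1) (hβ : 0 < β) :
    ∃ c : ℝ, 0 < c ∧
      ∀ (d n m : ℕ), 1 ≤ d → 1 ≤ n →
      ∀ (X : Fin d → Type*) [∀ j, MeasurableSpace (X j)]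
        (Θ : Fin d → Type*) (p : ∀ j, Θ j → Measure (X j)),
        (∀ j t, IsProbabilityMeasure (p j t)) →
      ∀ (θp θm : ∀ j, Θ j) (α : Fin d → ℝ),
        (∀ j, α j ∈ Set.Ioo αlo αhi) →
        (∀ j, tvDist (Measure.pi fun _ : Fin n => p j (θp j))
            (Measure.pi fun _ : Fin n => p j (θm j)) ≤ α j - β / Real.sqrt d) →
        (∀ j, α j + β / Real.sqrt d ≤
            tvDist (Measure.pi fun _ : Fin (n + m) => p j (θp j))
              (Measure.pi fun _ : Fin (n + m) => p j (θm j))) →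
        c ≤ ampErr (fun θ : (∀ j, Θ j) => Measure.pi fun j => p j (θ j)) n m := by
  refine ⟨β ^ 2 / (1 + β ^ 2), by positivity, ?_⟩
  intro d n m hd _ X _ Θ p _ θp θm α _ hle hge
  have : Nonempty (Fin d) := Fin.pos_iff_nonempty.1 hd
  have hgap (j) : 2 * (β / √d) ≤
      tvDist (Measure.pi fun _ : Fin (n + m) => p j (θp j))
        (Measure.pi fun _ : Fin (n + m) => p j (θm j)) -
      tvDist (Measure.pi fun _ : Fin n => p j (θp j))
        (Measure.pi fun _ : Fin n => p j (θm j)) := by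
    linarith [hle j, hge j]
  refine product_model_amplification_lower_bound_general p θp θm n m hβ.le ?_
  calc 2 * β * √(Fintype.card (Fin d)) = 2 * β * (d / √d) := by
        rw [Fintype.card_fin, Real.div_sqrt]
    _ = ∑ _ : Fin d, 2 * (β / √d) := by
        rw [Fin.sum_const, nsmul_eq_mul]
        ring
    _ ≤ _ := Finset.sum_le_sum fun j _ => hgap j
end
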